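/- arXiv:2504.11854 — 9 statements merged into one kernel-verified Lean document; each statement's English description precedes it below -/
import Mathlib

section
/- For any DAO with member valuations v_1 ≥ v_2 ≥ ⋯ ≥ v_n ≥ 0 and any grouping 𝒢 = {G^1,…,G^k} of {1,…,n} into k nonempty subgroups, there exists a continuous grouping 𝒢̄ = {Ḡ^1,…,Ḡ^k} of {1,…,n} into k nonempty subgroups such that WTP_total(𝒢̄) ≥ WTP_total(𝒢). -/
open scoped Classical

noncomputable section

/-- The willingness to pay of a subgroup `S` of members, where `v` lists the members'
valuations (non-increasing in the index): `WTP(S) = max_{1 ≤ i ≤ |S|} i · w_i`, where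
`w_1 ≥ ⋯ ≥ w_m` are the valuations of the members of `S` in non-increasing order.
Since `v` is non-increasing, the rank of member `a` in `S` is `|{c ∈ S : c ≤ a}|`. -/
def WTP (v : ℕ → ℝ) (S : Finset ℕ) : ℝ :=
  sSup ((fun a => ((S.filter (fun c => c ≤ a)).card : ℝ) * v a) '' (S : Set ℕ))

/-- The total willingness to pay of a grouping `𝒢`: listing the subgroup values
non-increasingly as `W_1 ≥ ⋯ ≥ W_k`, it is `max_{1 ≤ j ≤ k} j · W_j`.  Equivalently,
it is the max over `G ∈ 𝒢` of `|{G' ∈ 𝒢 : WTP(G') ≥ WTP(G)}| · WTP(G)`. -/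
def WTPtotal (v : ℕ → ℝ) (𝒢 : Finset (Finset ℕ)) : ℝ :=
  sSup ((fun G => ((𝒢.filter (fun G' => WTP v G ≤ WTP v G')).card : ℝ) * WTP v G) ''
    (𝒢 : Set (Finset ℕ)))

/-- `𝒢` is a grouping of the members `{1, …, n}`: a partition into nonempty subgroups. -/
def IsGrouping (n : ℕ) (𝒢 : Finset (Finset ℕ)) : Prop :=
  (∀ G ∈ 𝒢, G.Nonempty) ∧
  (𝒢 : Set (Finset ℕ)).PairwiseDisjoint id ∧
  𝒢.sup id = Finset.Icc 1 n

/-- A grouping is continuous if every subgroup is a set of consecutive indices. -/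
def ContinuousGrouping (𝒢 : Finset (Finset ℕ)) : Prop :=
  ∀ G ∈ 𝒢, ∀ a ∈ G, ∀ c ∈ G, ∀ b, a ≤ b → b ≤ c → b ∈ G

/-- Any member of `S` gives a lower bound for the willingness to pay of `S`. -/
theorem card_mul_le_WTP (v : ℕ → ℝ) {S : Finset ℕ} {a : ℕ} (ha : a ∈ S) :
    ((S.filter (fun c => c ≤ a)).card : ℝ) * v a ≤ WTP v S :=
  le_csSup (S.finite_toSet.image _).bddAbove ⟨a, ha, rfl⟩

/-- The maximum defining `WTP v S` is attained when `S` is nonempty. -/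
theorem exists_WTP_eq (v : ℕ → ℝ) {S : Finset ℕ} (hS : S.Nonempty) :
    ∃ a ∈ S, ((S.filter (fun c => c ≤ a)).card : ℝ) * v a = WTP v S :=
  (Set.Nonempty.image _ (Finset.coe_nonempty.2 hS)).csSup_mem (S.finite_toSet.image _)

/-- If the groups of `𝒢` are mapped injectively to groups with at least the same nonnegative
willingness to pay, then the total willingness to pay does not decrease. -/
theorem WTPtotal_le_WTPtotal_image (v : ℕ → ℝ) {𝒢 : Finset (Finset ℕ)} (h𝒢 : 𝒢.Nonempty)
    {f : Finset ℕ → Finset ℕ} (hf : Set.InjOn f 𝒢) (h0 : ∀ G ∈ 𝒢, 0 ≤ WTP v G)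
    (hle : ∀ G ∈ 𝒢, WTP v G ≤ WTP v (f G)) :
    WTPtotal v 𝒢 ≤ WTPtotal v (𝒢.image f) := by
  refine csSup_le (Set.Nonempty.image _ (Finset.coe_nonempty.2 h𝒢)) ?_
  rintro _ ⟨G, hG, rfl⟩
  have hG : G ∈ 𝒢 := hG
  set A := 𝒢.filter (fun G' => WTP v G ≤ WTP v G')
  have hAs : A ⊆ 𝒢 := Finset.filter_subset _ _
  obtain ⟨H, hH, hmin⟩ := A.exists_min_image (fun G' => WTP v (f G'))
    ⟨G, Finset.mem_filter.2 ⟨hG, le_rfl⟩⟩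
  have hH' := Finset.mem_filter.1 hH
  have hGH : WTP v G ≤ WTP v (f H) := hH'.2.trans (hle H hH'.1)
  have hcard : A.card ≤
      ((𝒢.image f).filter (fun G' => WTP v (f H) ≤ WTP v G')).card := by
    rw [← Finset.card_image_of_injOn (hf.mono (Finset.coe_subset.2 hAs))]
    refine Finset.card_le_card fun K hK => ?_
    obtain ⟨G', hG', rfl⟩ := Finset.mem_image.1 hK
    exact Finset.mem_filter.2 ⟨Finset.mem_image_of_mem f (hAs hG'), hmin G' hG'⟩
  calc (A.card : ℝ) * WTP v G ≤ _ * WTP v (f H) :=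
        mul_le_mul (Nat.cast_le.2 hcard) hGH (h0 G hG) (Nat.cast_nonneg _)
    _ ≤ WTPtotal v (𝒢.image f) :=
        le_csSup ((Finset.finite_toSet _).image _).bddAbove
          ⟨f H, Finset.mem_coe.2 (Finset.mem_image_of_mem f hH'.1), rfl⟩

/-- Pairwise disjoint groups of positive indices, truncated at members `a G ≤ N`, have at most
`N` members altogether. -/
theorem sum_card_filter_le {𝒢 : Finset (Finset ℕ)} {a : Finset ℕ → ℕ} {N : ℕ}
    (hdisj : (𝒢 : Set (Finset ℕ)).PairwiseDisjoint id) (hpos : ∀ G ∈ 𝒢, ∀ c ∈ G, 1 ≤ c)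
    (ha : ∀ G ∈ 𝒢, a G ≤ N) :
    ∑ G ∈ 𝒢, (G.filter (fun c => c ≤ a G)).card ≤ N := by
  have hd : (𝒢 : Set (Finset ℕ)).PairwiseDisjoint fun G => G.filter (fun c => c ≤ a G) :=
    fun G hG H hH hne => Finset.disjoint_filter_filter (hdisj hG hH hne)
  rw [← Finset.card_biUnion hd]
  refine (Finset.card_le_card (t := Finset.Icc 1 N) fun c hc => ?_).trans (by simp)
  obtain ⟨G, hG, hc⟩ := Finset.mem_biUnion.1 hc
  obtain ⟨hcG, hca⟩ := Finset.mem_filter.1 hc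
  exact Finset.mem_Icc.2 ⟨hpos G hG c hcG, hca.trans (ha G hG)⟩

/-- Listing the groups `G` by increasing `a G`, consecutive intervals with as many members as the
truncations of the groups at `a G` (the last one possibly longer) have at least the willingness
to pay that `a G` witnesses for `G`. -/
theorem exists_consecutive_groups {n : ℕ} {v : ℕ → ℝ}
    (hmono : ∀ i j, 1 ≤ i → i ≤ j → j ≤ n → v j ≤ v i) (a : Finset ℕ → ℕ)
    (𝒢 : Finset (Finset ℕ)) (ha : ∀ G ∈ 𝒢, a G ∈ G)
    (hdisj : (𝒢 : Set (Finset ℕ)).PairwiseDisjoint id)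
    (hsub : ∀ G ∈ 𝒢, G ⊆ Finset.Icc 1 n) (m : ℕ)
    (hm : ∑ G ∈ 𝒢, (G.filter (fun c => c ≤ a G)).card ≤ m) (hm0 : 𝒢 = ∅ → m = 0) :
    ∃ f : Finset ℕ → Finset ℕ,
      (∀ G ∈ 𝒢, (f G).Nonempty) ∧
      (∀ G ∈ 𝒢, ∃ x y, f G = Finset.Ioc x y) ∧
      (𝒢 : Set (Finset ℕ)).PairwiseDisjoint f ∧
      𝒢.sup f = Finset.Icc 1 m ∧
      ∀ G ∈ 𝒢, ((G.filter (fun c => c ≤ a G)).card : ℝ) * v (a G) ≤ WTP v (f G) := by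
  induction 𝒢 using Finset.induction_on_max_value a generalizing m with
  | empty => exact ⟨id, by simp [hm0 rfl]⟩
  | insert H 𝒢 hH hmax ih =>
    set T := ∑ G ∈ 𝒢, (G.filter (fun c => c ≤ a G)).card with hT
    have hmem : ∀ {G}, G ∈ 𝒢 → G ∈ insert H 𝒢 := Finset.mem_insert_of_mem
    have hHm := Finset.mem_insert_self H 𝒢
    obtain ⟨f, hne, hcon, hfd, hsup, hW⟩ := ih (fun G hG => ha G (hmem hG))
      (hdisj.subset (by simp)) (fun G hG => hsub G (hmem hG)) T le_rfl
      (by rintro rfl; simp [hT])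
    set r := (H.filter (fun c => c ≤ a H)).card
    have hr1 : 1 ≤ r :=
      Finset.card_pos.2 ⟨a H, Finset.mem_filter.2 ⟨ha H hHm, le_rfl⟩⟩
    rw [Finset.sum_insert hH] at hm
    have hTa : r + T ≤ a H := by
      have := sum_card_filter_le (a := a) (N := a H) hdisj
        (fun G hG c hc => (Finset.mem_Icc.1 (hsub G hG hc)).1)
        (by simpa using hmax)
      rwa [Finset.sum_insert hH] at this
    have heq : ∀ G ∈ 𝒢, Function.update f H (Finset.Ioc T m) G = f G := fun G hG =>
      Function.update_of_ne (by rintro rfl; exact hH hG) _ _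
    have hfT : ∀ G ∈ 𝒢, f G ⊆ Finset.Icc 1 T := fun G hG => hsup ▸ Finset.le_sup hG
    have hdHf : ∀ G ∈ 𝒢, Disjoint (Finset.Ioc T m) (f G) := fun G hG => by
      refine Finset.disjoint_left.2 fun c hc hc' => ?_
      have h₁ := Finset.mem_Ioc.1 hc
      have h₂ := Finset.mem_Icc.1 (hfT G hG hc')
      omega
    refine ⟨Function.update f H (Finset.Ioc T m), ?_, ?_, ?_, ?_, ?_⟩
    · refine Finset.forall_mem_insert _ _ _ |>.2 ⟨?_, fun G hG => by rw [heq G hG]; exact hne G hG⟩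
      simp only [Function.update_self, Finset.nonempty_Ioc]
      omega
    · exact Finset.forall_mem_insert _ _ _ |>.2 ⟨⟨T, m, by simp⟩,
        fun G hG => by rw [heq G hG]; exact hcon G hG⟩
    · rw [Finset.coe_insert]
      refine Set.PairwiseDisjoint.insert ?_ fun G hG _ => ?_
      · intro G hG K hK hGK
        simp only [Function.onFun, heq G hG, heq K hK]
        exact hfd hG hK hGK
      · rw [heq G hG, Function.update_self]
        exact hdHf G hG
    · rw [Finset.sup_insert, Finset.sup_congr rfl heq, hsup, Function.update_self]
      ext c
      simp only [Finset.sup_eq_union, Finset.mem_union, Finset.mem_Ioc, Finset.mem_Icc]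
      omega
    · refine Finset.forall_mem_insert _ _ _ |>.2 ⟨?_, fun G hG => by rw [heq G hG]; exact hW G hG⟩
      rw [Function.update_self]
      have hx : r + T ∈ Finset.Ioc T m := Finset.mem_Ioc.2 ⟨by omega, hm⟩
      have hcard : ((Finset.Ioc T m).filter (fun c => c ≤ r + T)).card = r := by
        have : (Finset.Ioc T m).filter (fun c => c ≤ r + T) = Finset.Ioc T (r + T) := by
          ext c
          simp only [Finset.mem_filter, Finset.mem_Ioc]
          omega
        simp [this]
      have hWx := card_mul_le_WTP v hx
      rw [hcard] at hWx
      refine le_trans (mul_le_mul_of_nonneg_left ?_ (Nat.cast_nonneg _)) hWx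
      exact hmono _ _ (by omega) hTa (Finset.mem_Icc.1 (hsub H hHm (ha H hHm))).2

/-- Theorem 1: for any DAO with valuations `v_1 ≥ ⋯ ≥ v_n ≥ 0`
and any grouping `𝒢` of `{1,…,n}` into `k` nonempty subgroups, there is a continuous
grouping `𝒢'` into `k` nonempty subgroups with `WTP_total(𝒢') ≥ WTP_total(𝒢)`. -/
theorem stmt0 (n : ℕ) (v : ℕ → ℝ)
    (hmono : ∀ i j, 1 ≤ i → i ≤ j → j ≤ n → v j ≤ v i)
    (hnonneg : ∀ i, 1 ≤ i → i ≤ n → 0 ≤ v i)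
    (𝒢 : Finset (Finset ℕ)) (hG : IsGrouping n 𝒢) :
    ∃ 𝒢' : Finset (Finset ℕ),
      IsGrouping n 𝒢' ∧ ContinuousGrouping 𝒢' ∧ 𝒢'.card = 𝒢.card ∧
      WTPtotal v 𝒢 ≤ WTPtotal v 𝒢' := by
  obtain ⟨hne, hdisj, hsup⟩ := hG
  rcases 𝒢.eq_empty_or_nonempty with rfl | h𝒢
  · exact ⟨∅, ⟨hne, hdisj, hsup⟩, by simp [ContinuousGrouping], rfl, le_rfl⟩
  have hsub : ∀ G ∈ 𝒢, G ⊆ Finset.Icc 1 n := fun G hG => hsup ▸ Finset.le_sup (f := id) hG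
  have hex : ∀ G : Finset ℕ, ∃ a, G ∈ 𝒢 →
      a ∈ G ∧ ((G.filter (fun c => c ≤ a)).card : ℝ) * v a = WTP v G := fun G => by
    by_cases hG : G ∈ 𝒢
    · obtain ⟨a, ha, hW⟩ := exists_WTP_eq v (hne G hG)
      exact ⟨a, fun _ => ⟨ha, hW⟩⟩
    · exact ⟨0, fun h => absurd h hG⟩
  choose a ha using hex
  have haI : ∀ G ∈ 𝒢, 1 ≤ a G ∧ a G ≤ n := fun G hG =>
    Finset.mem_Icc.1 (hsub G hG (ha G hG).1)
  obtain ⟨f, hfne, hfcon, hfd, hfsup, hfW⟩ := exists_consecutive_groups hmono a 𝒢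
    (fun G hG => (ha G hG).1) hdisj hsub n
    (sum_card_filter_le hdisj (fun G hG c hc => (Finset.mem_Icc.1 (hsub G hG hc)).1)
      fun G hG => (haI G hG).2)
    (fun h => absurd h h𝒢.ne_empty)
  have hinj : Set.InjOn f 𝒢 := fun G hG K hK hGK => by
    by_contra hne'
    have hd : Disjoint (f G) (f K) := hfd hG hK hne'
    rw [← hGK, disjoint_self] at hd
    exact (hfne G hG).ne_empty hd
  refine ⟨𝒢.image f, ⟨?_, ?_, ?_⟩, ?_, Finset.card_image_of_injOn hinj,
    WTPtotal_le_WTPtotal_image v h𝒢 hinj (fun G hG => ?_) fun G hG => ?_⟩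
  · exact Finset.forall_mem_image.2 hfne
  · rw [Finset.coe_image]
    rintro _ ⟨G, hG, rfl⟩ _ ⟨K, hK, rfl⟩ hGK
    exact hfd hG hK fun h => hGK (congrArg f h)
  · rw [Finset.sup_image, Function.id_comp, hfsup]
  · refine Finset.forall_mem_image.2 fun G hG => ?_
    obtain ⟨x, y, hxy⟩ := hfcon G hG
    simp only [hxy, Finset.mem_Ioc]
    intros
    omega
  · rw [← (ha G hG).2]
    exact mul_nonneg (Nat.cast_nonneg _) (hnonneg _ (haI G hG).1 (haI G hG).2)
  · rw [← (ha G hG).2]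
    exact hfW G hG

end
end

section
/- For any DAO with member valuations v_1 ≥ v_2 ≥ ⋯ ≥ v_n ≥ 0, there exists a continuous grouping 𝒢 of {1,…,n} that achieves the maximum total willingness to pay over all groupings, i.e. WTP_total(𝒢) = opt_WTP where opt_WTP = max over all k and all groupings 𝒢' into k nonempty subgroups of WTP_total(𝒢'). -/
open scoped Classical

noncomputable section

theorem le_sSup_image_coe_finset {α : Type*} (f : α → ℝ) {s : Finset α} {a : α} (ha : a ∈ s) :
    f a ≤ sSup (f '' (s : Set α)) :=
  le_csSup (s.finite_toSet.image f).bddAbove ⟨a, ha, rfl⟩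

theorem exists_eq_sSup_image_coe_finset {α : Type*} (f : α → ℝ) {s : Finset α}
    (hs : s.Nonempty) : ∃ a ∈ s, f a = sSup (f '' (s : Set α)) :=
  Set.Nonempty.csSup_mem (hs.to_set.image f) (s.finite_toSet.image f)

theorem IsGrouping.subset_Icc {n : ℕ} {𝒢 : Finset (Finset ℕ)} (h : IsGrouping n 𝒢)
    {G : Finset ℕ} (hG : G ∈ 𝒢) : G ⊆ Finset.Icc 1 n :=
  h.2.2 ▸ Finset.le_sup (f := id) hG

theorem IsGrouping.nonempty {n : ℕ} {𝒢 : Finset (Finset ℕ)} (h : IsGrouping n 𝒢)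
    (hn : 1 ≤ n) : 𝒢.Nonempty := by
  rw [Finset.nonempty_iff_ne_empty]
  rintro rfl
  have h1 : 1 ∈ Finset.Icc 1 n := by simp [hn]
  rw [← h.2.2] at h1
  simp at h1

theorem isGrouping_singleton {n : ℕ} (hn : 1 ≤ n) : IsGrouping n {Finset.Icc 1 n} := by
  refine ⟨?_, ?_, ?_⟩ <;> simp [hn]

theorem finite_setOf_isGrouping (n : ℕ) : {𝒢 | IsGrouping n 𝒢}.Finite := by
  refine (Finset.Icc 1 n).powerset.powerset.finite_toSet.subset fun 𝒢 h => ?_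
  simp only [Finset.mem_coe, Finset.mem_powerset]
  exact fun G hG => Finset.mem_powerset.2 (IsGrouping.subset_Icc h hG)

/-- Appending the block `{M + 1, …, N}` to a grouping of `{1, …, M}`. -/
theorem IsGrouping.insert_Ioc {M N : ℕ} {𝒢 : Finset (Finset ℕ)} (h : IsGrouping M 𝒢)
    (hMN : M < N) : IsGrouping N (insert (Finset.Ioc M N) 𝒢) := by
  refine ⟨?_, ?_, ?_⟩
  · simp only [Finset.mem_insert, forall_eq_or_imp]
    exact ⟨⟨N, by simp [hMN]⟩, h.1⟩
  · rw [Finset.coe_insert]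
    refine h.2.1.insert fun G hG _ => Finset.disjoint_left.2 fun x hx hx' => ?_
    have := Finset.mem_Icc.1 (h.subset_Icc hG hx')
    have := Finset.mem_Ioc.1 hx
    omega
  · rw [Finset.sup_insert, h.2.2]
    ext x
    simp
    omega

theorem IsGrouping.Ioc_notMem {M N : ℕ} {𝒢 : Finset (Finset ℕ)} (h : IsGrouping M 𝒢)
    (hMN : M < N) : Finset.Ioc M N ∉ 𝒢 := fun hG => by
  have := Finset.mem_Icc.1 (h.subset_Icc hG (Finset.mem_Ioc.2 ⟨hMN, le_rfl⟩))
  omega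

/-- Disjoint sets `T i ⊆ {1, …, a i}` with `|T i| · v (a i) ≥ W` can be replaced by consecutive
blocks, in increasing order of `a i`, whose willingness to pay is at least `W`. -/
theorem exists_continuousGrouping_of_disjoint {ι : Type*} {n : ℕ} {v : ℕ → ℝ} {W : ℝ}
    (hmono : ∀ i j, 1 ≤ i → i ≤ j → j ≤ n → v j ≤ v i) (T : ι → Finset ℕ) (a : ι → ℕ)
    (s : Finset ι) (hT : ∀ i ∈ s, T i ⊆ Finset.Icc 1 (a i)) (ha : ∀ i ∈ s, a i ≤ n)
    (hne : ∀ i ∈ s, (T i).Nonempty) (hW : ∀ i ∈ s, W ≤ (T i).card * v (a i))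
    (hdisj : (s : Set ι).PairwiseDisjoint T) (N : ℕ) (hN : ∑ i ∈ s, (T i).card ≤ N)
    (hs : s = ∅ → N = 0) :
    ∃ 𝒢, IsGrouping N 𝒢 ∧ ContinuousGrouping 𝒢 ∧ 𝒢.card = s.card ∧ ∀ G ∈ 𝒢, W ≤ WTP v G := by
  induction s using Finset.strongInduction generalizing N with
  | H s ih =>
  rcases s.eq_empty_or_nonempty with rfl | hsne
  · obtain rfl := hs rfl
    exact ⟨∅, by simp [IsGrouping], by simp [ContinuousGrouping], rfl, by simp⟩
  obtain ⟨i, hi, himax⟩ := s.exists_max_image a hsne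
  have hsub : s.erase i ⊆ s := s.erase_subset i
  set M := ∑ k ∈ s.erase i, (T k).card with hM
  obtain ⟨𝒢, h𝒢, hcont, hcard, hWTP⟩ := ih (s.erase i) (Finset.erase_ssubset hi)
    (fun k hk => hT k (hsub hk)) (fun k hk => ha k (hsub hk)) (fun k hk => hne k (hsub hk))
    (fun k hk => hW k (hsub hk)) (hdisj.subset (by exact_mod_cast hsub)) M le_rfl
    (fun h => by simp [hM, h])
  have hsum : M + (T i).card = ∑ k ∈ s, (T k).card := Finset.sum_erase_add _ _ hi
  have hpos : 0 < (T i).card := (hne i hi).card_pos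
  have hle : M + (T i).card ≤ a i := by
    rw [hsum, ← Finset.card_biUnion hdisj]
    have : s.biUnion T ⊆ Finset.Icc 1 (a i) := Finset.biUnion_subset.2 fun k hk =>
      (hT k hk).trans (Finset.Icc_subset_Icc_right (himax k hk))
    simpa using Finset.card_le_card this
  have hMN : M < N := by omega
  refine ⟨insert (Finset.Ioc M N) 𝒢, h𝒢.insert_Ioc hMN, ?_, ?_, ?_⟩
  · intro G hG
    rcases Finset.mem_insert.1 hG with rfl | hG
    · intro x hx y hy z hxz hzy
      simp only [Finset.mem_Ioc] at *
      omega
    · exact hcont G hG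
  · rw [Finset.card_insert_of_notMem (h𝒢.Ioc_notMem hMN), hcard, Finset.card_erase_add_one hi]
  · intro G hG
    rcases Finset.mem_insert.1 hG with rfl | hG
    · have hmem : M + (T i).card ∈ Finset.Ioc M N := Finset.mem_Ioc.2 ⟨by omega, by omega⟩
      have hfilter : (Finset.Ioc M N).filter (fun c => c ≤ M + (T i).card)
          = Finset.Ioc M (M + (T i).card) := by
        ext x
        simp only [Finset.mem_filter, Finset.mem_Ioc]
        omega
      have hv : v (a i) ≤ v (M + (T i).card) := hmono _ _ (by omega) hle (ha i hi)
      have key := le_sSup_image_coe_finset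
        (fun b => (((Finset.Ioc M N).filter (fun c => c ≤ b)).card : ℝ) * v b) hmem
      simp only [hfilter, Nat.card_Ioc, Nat.add_sub_cancel_left] at key
      exact (hW i hi).trans ((mul_le_mul_of_nonneg_left hv (Nat.cast_nonneg _)).trans key)
    · exact hWTP G hG

/-- If all subgroups have willingness to pay at least `W`, the total is at least `|𝒢| · W`. -/
theorem card_mul_le_WTPtotal {v : ℕ → ℝ} {W : ℝ} {𝒢 : Finset (Finset ℕ)} (hne : 𝒢.Nonempty)
    (hW : ∀ G ∈ 𝒢, W ≤ WTP v G) : (𝒢.card : ℝ) * W ≤ WTPtotal v 𝒢 := by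
  obtain ⟨G, hG, hmin⟩ := 𝒢.exists_min_image (WTP v) hne
  have key := le_sSup_image_coe_finset
    (fun G => ((𝒢.filter (fun G' => WTP v G ≤ WTP v G')).card : ℝ) * WTP v G) hG
  simp only [Finset.filter_true_of_mem hmin] at key
  exact (mul_le_mul_of_nonneg_left (hW G hG) (Nat.cast_nonneg _)).trans key

/-- Every grouping is weakly dominated by a continuous one. -/
theorem exists_continuousGrouping_WTPtotal_le {n : ℕ} {v : ℕ → ℝ} (hn : 1 ≤ n)
    (hmono : ∀ i j, 1 ≤ i → i ≤ j → j ≤ n → v j ≤ v i)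
    {𝒢 : Finset (Finset ℕ)} (h𝒢 : IsGrouping n 𝒢) :
    ∃ ℋ, IsGrouping n ℋ ∧ ContinuousGrouping ℋ ∧ WTPtotal v 𝒢 ≤ WTPtotal v ℋ := by
  obtain ⟨G, hG, hGeq⟩ := exists_eq_sSup_image_coe_finset
    (fun G => ((𝒢.filter (fun G' => WTP v G ≤ WTP v G')).card : ℝ) * WTP v G) (h𝒢.nonempty hn)
  set s := 𝒢.filter (fun G' => WTP v G ≤ WTP v G')
  have hs𝒢 : s ⊆ 𝒢 := Finset.filter_subset _ _
  have hrank : ∀ S : Finset ℕ, ∃ a, S ∈ 𝒢 → a ∈ S ∧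
      ((S.filter (fun c => c ≤ a)).card : ℝ) * v a = WTP v S := fun S => by
    by_cases hS : S ∈ 𝒢
    · obtain ⟨a, ha, hEq⟩ := exists_eq_sSup_image_coe_finset
        (fun a => ((S.filter (fun c => c ≤ a)).card : ℝ) * v a) (h𝒢.1 S hS)
      exact ⟨a, fun _ => ⟨ha, hEq⟩⟩
    · exact ⟨0, fun h => absurd h hS⟩
  choose a ha using hrank
  have hdisj : (s : Set (Finset ℕ)).PairwiseDisjoint fun S => S.filter (fun c => c ≤ a S) :=
    fun S hS S' hS' hne => Finset.disjoint_filter_filter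
      (h𝒢.2.1 (hs𝒢 hS) (hs𝒢 hS') hne)
  have hsum : ∑ S ∈ s, (S.filter (fun c => c ≤ a S)).card ≤ n := by
    rw [← Finset.card_biUnion hdisj]
    have hsub : s.biUnion (fun S => S.filter (fun c => c ≤ a S)) ⊆ Finset.Icc 1 n :=
      Finset.biUnion_subset.2 fun S hS =>
        (Finset.filter_subset _ _).trans (h𝒢.subset_Icc (hs𝒢 hS))
    simpa using Finset.card_le_card hsub
  have hGs : G ∈ s := Finset.mem_filter.2 ⟨hG, le_rfl⟩
  obtain ⟨ℋ, hℋ, hcont, hcard, hWTP⟩ := exists_continuousGrouping_of_disjoint (W := WTP v G)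
    hmono (fun S => S.filter (fun c => c ≤ a S)) a s
    (fun S hS x hx => by
      have hx := Finset.mem_filter.1 hx
      exact Finset.mem_Icc.2 ⟨(Finset.mem_Icc.1 (h𝒢.subset_Icc (hs𝒢 hS) hx.1)).1, hx.2⟩)
    (fun S hS => (Finset.mem_Icc.1 (h𝒢.subset_Icc (hs𝒢 hS) (ha S (hs𝒢 hS)).1)).2)
    (fun S hS => ⟨a S, by simp [(ha S (hs𝒢 hS)).1]⟩)
    (fun S hS => (ha S (hs𝒢 hS)).2 ▸ (Finset.mem_filter.1 hS).2)
    hdisj n hsum (fun h => absurd hGs (by simp [h]))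
  refine ⟨ℋ, hℋ, hcont, ?_⟩
  have := card_mul_le_WTPtotal (hℋ.nonempty hn) hWTP
  rw [hcard] at this
  exact hGeq.symm.le.trans this

/-- Corollary 1: for any DAO with valuations `v_1 ≥ ⋯ ≥ v_n ≥ 0`,
there is a continuous grouping achieving the maximum total willingness to pay
`opt_WTP` over all groupings. -/
theorem stmt1 (n : ℕ) (v : ℕ → ℝ) (hn : 1 ≤ n)
    (hmono : ∀ i j, 1 ≤ i → i ≤ j → j ≤ n → v j ≤ v i)
    (hnonneg : ∀ i, 1 ≤ i → i ≤ n → 0 ≤ v i) :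
    ∃ 𝒢 : Finset (Finset ℕ),
      IsGrouping n 𝒢 ∧ ContinuousGrouping 𝒢 ∧
      IsGreatest {W : ℝ | ∃ 𝒢' : Finset (Finset ℕ), IsGrouping n 𝒢' ∧ WTPtotal v 𝒢' = W}
        (WTPtotal v 𝒢) := by
  obtain ⟨𝒢, h𝒢, hmax⟩ := Set.exists_max_image {𝒢 | IsGrouping n 𝒢} (WTPtotal v)
    (finite_setOf_isGrouping n) ⟨_, isGrouping_singleton hn⟩
  obtain ⟨ℋ, hℋ, hcont, hle⟩ := exists_continuousGrouping_WTPtotal_le hn hmono h𝒢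
  refine ⟨ℋ, hℋ, hcont, ⟨ℋ, hℋ, rfl⟩, ?_⟩
  rintro _ ⟨𝒢', h𝒢', rfl⟩
  exact (hmax 𝒢' h𝒢').trans hle

end
end

section
/- Let v_1 ≥ v_2 ≥ ⋯ ≥ v_n ≥ 0 and let CV > 0. If the greedy procedure with threshold CV closes subgroups Ĝ^1,…,Ĝ^k (in order of member indices) with sizes n̂^1,…,n̂^k, then n̂^1 ≤ n̂^2 ≤ ⋯ ≤ n̂^k. -/
open scoped Classical

noncomputable section

/-- `GreedyBoundaries v n CV k N` says that the greedy procedure with threshold `CV`,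
scanning members `1, …, n` (with valuations `v_1 ≥ ⋯ ≥ v_n`) in order, closes exactly
`k` subgroups, the `j`-th closed subgroup being `Ĝ^j = {N_{j-1}+1, …, N_j}`:
a subgroup is closed the first time its size `s` and last-added member `i`
satisfy `s · v_i ≥ CV`, and the members after `N_k` never close a subgroup. -/
def GreedyBoundaries (v : ℕ → ℝ) (n : ℕ) (CV : ℝ) (k : ℕ) (N : ℕ → ℕ) : Prop :=
  N 0 = 0 ∧
  (∀ j, 1 ≤ j → j ≤ k →
    N (j - 1) < N j ∧ N j ≤ n ∧
    CV ≤ ((N j - N (j - 1) : ℕ) : ℝ) * v (N j) ∧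
    (∀ i, N (j - 1) < i → i < N j → ((i - N (j - 1) : ℕ) : ℝ) * v i < CV)) ∧
  (∀ i, N k < i → i ≤ n → ((i - N k : ℕ) : ℝ) * v i < CV)

/-- Two consecutive closed subgroups have non-decreasing sizes: otherwise the earlier one
would have been closed as soon as it reached the size of the later one. -/
theorem GreedyBoundaries.size_le_size_succ {v : ℕ → ℝ} {n : ℕ} {CV : ℝ} {k : ℕ} {N : ℕ → ℕ}
    (h : GreedyBoundaries v n CV k N)
    (hmono : ∀ i j, 1 ≤ i → i ≤ j → j ≤ n → v j ≤ v i)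
    {j : ℕ} (hj : 1 ≤ j) (hjk : j + 1 ≤ k) :
    N j - N (j - 1) ≤ N (j + 1) - N j := by
  obtain ⟨-, hclosed, -⟩ := h
  obtain ⟨-, -, -, hfirst⟩ := hclosed j hj (by omega)
  obtain ⟨hlt, hle, hreach, -⟩ := hclosed (j + 1) (by omega) hjk
  simp only [Nat.add_sub_cancel] at hlt hreach
  by_contra! hsize
  have hearly := hfirst (N (j - 1) + (N (j + 1) - N j)) (by omega) (by omega)
  rw [Nat.add_sub_cancel_left] at hearly
  have hv := hmono (N (j - 1) + (N (j + 1) - N j)) (N (j + 1)) (by omega) (by omega) hle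
  exact absurd (hreach.trans (mul_le_mul_of_nonneg_left hv (Nat.cast_nonneg _))) hearly.not_ge

/-- Lemma 1: the sizes `n̂^j = N_j − N_{j-1}` of the subgroups closed
by the greedy procedure with threshold `CV > 0` are non-decreasing:
`n̂^1 ≤ n̂^2 ≤ ⋯ ≤ n̂^k`. -/
theorem stmt2 (n : ℕ) (v : ℕ → ℝ)
    (hmono : ∀ i j, 1 ≤ i → i ≤ j → j ≤ n → v j ≤ v i)
    (hnonneg : ∀ i, 1 ≤ i → i ≤ n → 0 ≤ v i)
    (CV : ℝ) (hCV : 0 < CV) (k : ℕ) (N : ℕ → ℕ)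
    (hgreedy : GreedyBoundaries v n CV k N) :
    ∀ j₁ j₂, 1 ≤ j₁ → j₁ ≤ j₂ → j₂ ≤ k →
      N j₁ - N (j₁ - 1) ≤ N j₂ - N (j₂ - 1) := by
  intro j₁ j₂ h₁ h₁₂
  induction j₂, h₁₂ using Nat.le_induction with
  | base => exact fun _ => le_rfl
  | succ j hj ih =>
    intro hjk
    exact (ih (by omega)).trans (hgreedy.size_le_size_succ hmono (h₁.trans hj) hjk)

end
end

section
/- Let v_1 ≥ v_2 ≥ ⋯ ≥ v_n ≥ 0 and CV > 0, and let Ĝ^1,…,Ĝ^k be the closed subgroups of the greedy procedure with threshold CV, with end indices N̂^1 < ⋯ < N̂^k. Let Ḡ^1,…,Ḡ^m be pairwise disjoint sets of consecutive indices in {1,…,n}, listed in increasing order of indices, each satisfying WTP(Ḡ^j) ≥ CV, and let N̄^j = max Ḡ^j. Then m ≤ k, and N̂^j ≤ N̄^j for every j ≤ m. In particular, the greedy procedure produces the maximum possible number of pairwise disjoint consecutive-index subgroups each of willingness to pay at least CV. -/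
open scoped Classical

noncomputable section

/-- The maximum defining the willingness to pay of a nonempty interval is attained. -/
theorem exists_le_of_le_WTP_Icc {v : ℕ → ℝ} {CV : ℝ} {a b : ℕ} (hab : a ≤ b)
    (h : CV ≤ WTP v (Finset.Icc a b)) :
    ∃ i, a ≤ i ∧ i ≤ b ∧ CV ≤ ((i + 1 - a : ℕ) : ℝ) * v i := by
  have hmem := Set.Nonempty.csSup_mem
    ((Set.Nonempty.image (fun i => (((Finset.Icc a b).filter (fun c => c ≤ i)).card : ℝ) * v i)
      (Finset.coe_nonempty.2 (Finset.nonempty_Icc.2 hab))))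
    ((Finset.Icc a b).finite_toSet.image _)
  obtain ⟨i, hi, hval⟩ := hmem
  obtain ⟨hai, hib⟩ := Finset.mem_Icc.1 (Finset.mem_coe.1 hi)
  refine ⟨i, hai, hib, h.trans ?_⟩
  have hfilter : (Finset.Icc a b).filter (fun c => c ≤ i) = Finset.Icc a i := by
    ext c
    simp only [Finset.mem_filter, Finset.mem_Icc]
    omega
  rw [WTP, ← hval]
  simp only [hfilter, Nat.card_Icc, le_refl]

/-- If greedy has closed `j` subgroups before the interval `[a, b]` starts and the interval has
willingness to pay at least `CV`, then greedy closes another subgroup by the end of it. -/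
theorem GreedyBoundaries.succ_le_of_le_WTP_Icc {v : ℕ → ℝ} {n : ℕ} {CV : ℝ} {k : ℕ} {N : ℕ → ℕ}
    (hgreedy : GreedyBoundaries v n CV k N) (hnonneg : ∀ i, 1 ≤ i → i ≤ n → 0 ≤ v i)
    {j a b : ℕ} (hjk : j ≤ k) (hNa : N j < a) (hab : a ≤ b) (hbn : b ≤ n)
    (h : CV ≤ WTP v (Finset.Icc a b)) : j + 1 ≤ k ∧ N (j + 1) ≤ b := by
  obtain ⟨-, hclosed, hrest⟩ := hgreedy
  obtain ⟨i, hai, hib, hi⟩ := exists_le_of_le_WTP_Icc hab h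
  have hCV : CV ≤ ((i - N j : ℕ) : ℝ) * v i := by
    refine hi.trans (mul_le_mul_of_nonneg_right ?_ (hnonneg i (by omega) (by omega)))
    exact_mod_cast (by omega : i + 1 - a ≤ i - N j)
  have hlt : j + 1 ≤ k := by
    by_contra hne
    obtain rfl : j = k := by omega
    exact (hrest i (by omega) (by omega)).not_ge hCV
  refine ⟨hlt, ?_⟩
  by_contra! hb
  exact ((hclosed (j + 1) (by omega) hlt).2.2.2 i (by simpa using hNa.trans_le hai)
    (by omega)).not_ge (by simpa using hCV)

/-- the greedy procedure with threshold `CV` is optimal.  If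
`Ḡ^1, …, Ḡ^m` are pairwise disjoint consecutive-index subgroups of `{1,…,n}` (given by
their endpoints `Ḡ^j = {s_j, …, e_j}`, listed in increasing order of indices), each
with `WTP(Ḡ^j) ≥ CV`, then `m ≤ k` and the greedy end index `N_j` satisfies
`N_j ≤ e_j = max Ḡ^j` for every `j ≤ m`.  In particular, greedy produces the maximum
possible number of pairwise disjoint consecutive-index subgroups of WTP at least `CV`. -/
theorem stmt3 (n : ℕ) (v : ℕ → ℝ)
    (hmono : ∀ i j, 1 ≤ i → i ≤ j → j ≤ n → v j ≤ v i)
    (hnonneg : ∀ i, 1 ≤ i → i ≤ n → 0 ≤ v i)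
    (CV : ℝ) (hCV : 0 < CV) (k : ℕ) (N : ℕ → ℕ)
    (hgreedy : GreedyBoundaries v n CV k N)
    (m : ℕ) (s e : ℕ → ℕ)
    (hint : ∀ j, 1 ≤ j → j ≤ m → 1 ≤ s j ∧ s j ≤ e j ∧ e j ≤ n)
    (horder : ∀ j, 1 ≤ j → j < m → e j < s (j + 1))
    (hwtp : ∀ j, 1 ≤ j → j ≤ m → CV ≤ WTP v (Finset.Icc (s j) (e j))) :
    m ≤ k ∧ ∀ j, 1 ≤ j → j ≤ m → N j ≤ e j := by
  have key : ∀ j, j ≤ m → j ≤ k ∧ (1 ≤ j → N j ≤ e j) := by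
    intro j
    induction j with
    | zero => simp
    | succ j ih =>
      intro hj
      obtain ⟨hjk, hN⟩ := ih (by omega)
      obtain ⟨hs, hse, hen⟩ := hint (j + 1) (by omega) hj
      have hlt : N j < s (j + 1) := by
        rcases Nat.eq_zero_or_pos j with rfl | hpos
        · rw [hgreedy.1]
          omega
        · exact (hN hpos).trans_lt (horder j hpos (by omega))
      have hstep := hgreedy.succ_le_of_le_WTP_Icc hnonneg hjk hlt hse hen
        (hwtp (j + 1) (by omega) hj)
      exact ⟨hstep.1, fun _ => hstep.2⟩
  exact ⟨(key m le_rfl).1, fun j hj hjm => (key j hjm).2 hj⟩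

end
end

section
/- Fix true values v_1 ≥ ⋯ ≥ v_n ≥ 0, a collectivism parameter α > 0, and a price P_total > 0. For any feasible parameter group (P_1, P_2, k_1, k_2) for mechanism M_1 under truthful bids (b_i = v_i for all i), every member's collective utility is nonnegative: u_i ≥ 0 for all i ∈ {1,…,n} (individual rationality of M_1). -/
open scoped Classical

noncomputable section

/-- Feasibility of a parameter group `(P_1, P_2, k_1, k_2)` (with `P_2 = P_1/(1+α)`
determined by `P_1`) for mechanism `M_1`, given non-increasing bids `b_1 ≥ ⋯ ≥ b_n ≥ 0`
and total price `P_total`: `P_1 > 0`, `k_1 = max { i : b_i ≥ P_1 }` (`k_1 = 0` if none),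
`k_2 = max { i : b_i ≥ P_2 }`, and budget balance
`k_1 · P_1 + Σ_{i = k_1+1}^{k_2} b_i = P_total`. -/
def Feasible (n : ℕ) (b : ℕ → ℝ) (α Ptotal P1 : ℝ) (k1 k2 : ℕ) : Prop :=
  0 < P1 ∧ k1 ≤ k2 ∧ k2 ≤ n ∧
  (∀ i, 1 ≤ i → i ≤ k1 → P1 ≤ b i) ∧
  (∀ i, k1 < i → i ≤ n → b i < P1) ∧
  (∀ i, 1 ≤ i → i ≤ k2 → P1 / (1 + α) ≤ b i) ∧
  (∀ i, k2 < i → i ≤ n → b i < P1 / (1 + α)) ∧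
  (k1 : ℝ) * P1 + ∑ i ∈ Finset.Icc (k1 + 1) k2, b i = Ptotal

/-- The access of member `i` under mechanism `M_1` with parameters `(P_1, k_1, k_2)`:
full access for `i ≤ k_1`, partial access `b_i / P_1` for `k_1 < i ≤ k_2`, none after. -/
def xAlloc (b : ℕ → ℝ) (P1 : ℝ) (k1 k2 : ℕ) (i : ℕ) : ℝ :=
  if i ≤ k1 then 1 else if i ≤ k2 then b i / P1 else 0

/-- The payment of member `i` under mechanism `M_1` with parameters `(P_1, k_1, k_2)`:
`P_1` for `i ≤ k_1`, `b_i` for `k_1 < i ≤ k_2`, `0` after. -/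
def pay (b : ℕ → ℝ) (P1 : ℝ) (k1 k2 : ℕ) (i : ℕ) : ℝ :=
  if i ≤ k1 then P1 else if i ≤ k2 then b i else 0

/-- The collective utility of member `i` with true values `v`, accesses `x` and
payments `p`: `v_i·x_i − p_i + α·Σ_j v_j·x_j` if `x_i > 0` and `p_i ≤ v_i`;
`−∞` if `p_i > v_i`; and `−p_i` if `x_i = 0`. -/
def util (n : ℕ) (v : ℕ → ℝ) (α : ℝ) (x p : ℕ → ℝ) (i : ℕ) : EReal :=
  if v i < p i then ⊥
  else if 0 < x i then ((v i * x i - p i + α * ∑ j ∈ Finset.Icc 1 n, v j * x j : ℝ) : EReal)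
  else ((-(p i) : ℝ) : EReal)

/-- A nonnegative bid and a nonnegative price give nonnegative access. -/
theorem xAlloc_nonneg {b : ℕ → ℝ} {P1 : ℝ} {k1 k2 i : ℕ} (hP : 0 ≤ P1) (hb : 0 ≤ b i) :
    0 ≤ xAlloc b P1 k1 k2 i := by
  unfold xAlloc
  split_ifs <;> positivity

/-- In a feasible parameter group no member pays more than their bid. -/
theorem Feasible.pay_le {n : ℕ} {b : ℕ → ℝ} {α Ptotal P1 : ℝ} {k1 k2 i : ℕ}
    (hF : Feasible n b α Ptotal P1 k1 k2) (hi : 1 ≤ i) (hb : 0 ≤ b i) :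
    pay b P1 k1 k2 i ≤ b i := by
  obtain ⟨-, -, -, hk1, -⟩ := hF
  unfold pay
  split_ifs with h1
  exacts [hk1 i hi h1, le_rfl, hb]

/-- In a feasible parameter group every payment is at most `(1 + α) · b_i · x_i`. -/
theorem Feasible.pay_le_mul_xAlloc {n : ℕ} {b : ℕ → ℝ} {α Ptotal P1 : ℝ} {k1 k2 i : ℕ}
    (hF : Feasible n b α Ptotal P1 k1 k2) (hα : 0 < α) (hi : 1 ≤ i) (hb : 0 ≤ b i) :
    pay b P1 k1 k2 i ≤ (1 + α) * (b i * xAlloc b P1 k1 k2 i) := by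
  obtain ⟨hP, -, -, hk1, -, hk2, -⟩ := hF
  unfold pay xAlloc
  split_ifs with h1 h2
  · nlinarith [hk1 i hi h1, mul_nonneg hα.le hb]
  · have h := hk2 i hi h2
    rw [div_le_iff₀ (by linarith)] at h
    have h' : 1 ≤ (1 + α) * (b i / P1) := by
      rw [← mul_div_assoc, le_div_iff₀ hP]
      linarith
    nlinarith [mul_le_mul_of_nonneg_left h' hb]
  · simp

/-- individual rationality of `M_1`: for any feasible parameter
group under truthful bids (`b = v`), every member's collective utility is nonnegative. -/
theorem stmt7 (n : ℕ) (v : ℕ → ℝ) (α Ptotal : ℝ)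
    (hα : 0 < α) (hPt : 0 < Ptotal)
    (hmono : ∀ i j, 1 ≤ i → i ≤ j → j ≤ n → v j ≤ v i)
    (hnonneg : ∀ i, 1 ≤ i → i ≤ n → 0 ≤ v i)
    (P1 : ℝ) (k1 k2 : ℕ)
    (hF : Feasible n v α Ptotal P1 k1 k2) :
    ∀ i, 1 ≤ i → i ≤ n →
      (0 : EReal) ≤ util n v α (xAlloc v P1 k1 k2) (pay v P1 k1 k2) i := by
  intro i hi hin
  have hvi := hnonneg i hi hin
  have hx : ∀ j ∈ Finset.Icc 1 n, 0 ≤ v j * xAlloc v P1 k1 k2 j := fun j hj => by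
    have hj' := Finset.mem_Icc.mp hj
    have hvj := hnonneg j hj'.1 hj'.2
    exact mul_nonneg hvj (xAlloc_nonneg hF.1.le hvj)
  have hsum := Finset.single_le_sum hx (Finset.mem_Icc.mpr ⟨hi, hin⟩)
  have hpay := hF.pay_le_mul_xAlloc hα hi hvi
  unfold util
  rw [if_neg (hF.pay_le hi hvi).not_gt]
  split_ifs with hpos
  · rw [EReal.coe_nonneg]
    linarith [mul_le_mul_of_nonneg_left hsum hα.le]
  · have hzero : xAlloc v P1 k1 k2 i = 0 :=
      le_antisymm (not_lt.mp hpos) (xAlloc_nonneg hF.1.le hvi)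
    rw [EReal.coe_nonneg]
    rw [hzero] at hpay
    linarith

end
end

section
/- Let b_1 ≥ ⋯ ≥ b_n ≥ 0 with b_1 > 0, α > 0, and a price P_total with 0 < P_total ≤ WTP_total, where WTP_total = max_{1≤i≤n} Σ_{j=1}^{i} min(b_j, (1+α)·b_i). Then there exists a feasible parameter group (P_1, P_2, k_1, k_2) for mechanism M_1; that is, there exist P_1 > 0, P_2 = P_1/(1+α), k_1 = max{ i : b_i ≥ P_1 } and k_2 = max{ i : b_i ≥ P_2 } ≥ 1 with k_1·P_1 + Σ_{i=k_1+1}^{k_2} b_i = P_total (budget balance). Consequently the payments of M_1 sum exactly to P_total. -/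
open scoped Classical

noncomputable section

/-- The aggregation function of mechanism `M_1`:
`WTP_total = max_{1 ≤ i ≤ n} Σ_{j=1}^{i} min(b_j, (1+α)·b_i)`. -/
def WTPtotalM1 (n : ℕ) (b : ℕ → ℝ) (α : ℝ) : ℝ :=
  sSup {x : ℝ | ∃ i, 1 ≤ i ∧ i ≤ n ∧
    x = ∑ j ∈ Finset.Icc 1 i, min (b j) ((1 + α) * b i)}

/-- The payments of `M_1` sum to `k_1 · P_1 + Σ_{i = k_1+1}^{k_2} b_i`. -/
theorem sum_pay_eq (n : ℕ) (b : ℕ → ℝ) (P1 : ℝ) {k1 k2 : ℕ} (h12 : k1 ≤ k2) (h2n : k2 ≤ n) :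
    ∑ i ∈ Finset.Icc 1 n, pay b P1 k1 k2 i =
      (k1 : ℝ) * P1 + ∑ i ∈ Finset.Icc (k1 + 1) k2, b i := by
  have hsplit : Finset.Icc 1 n =
      Finset.Icc 1 k1 ∪ (Finset.Icc (k1 + 1) k2 ∪ Finset.Icc (k2 + 1) n) := by
    ext i; simp only [Finset.mem_union, Finset.mem_Icc]; omega
  rw [hsplit, Finset.sum_union, Finset.sum_union]
  · have hfull : ∑ i ∈ Finset.Icc 1 k1, pay b P1 k1 k2 i = (k1 : ℝ) * P1 := by
      rw [Finset.sum_congr rfl (g := fun _ => P1)]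
      · simp
      · intro i hi
        simp [pay, (Finset.mem_Icc.1 hi).2]
    have hpartial : ∑ i ∈ Finset.Icc (k1 + 1) k2, pay b P1 k1 k2 i =
        ∑ i ∈ Finset.Icc (k1 + 1) k2, b i := by
      refine Finset.sum_congr rfl fun i hi => ?_
      rw [Finset.mem_Icc] at hi
      rw [pay, if_neg (by omega), if_pos hi.2]
    have hnone : ∑ i ∈ Finset.Icc (k2 + 1) n, pay b P1 k1 k2 i = 0 := by
      refine Finset.sum_eq_zero fun i hi => ?_
      rw [Finset.mem_Icc] at hi
      rw [pay, if_neg (by omega), if_neg (by omega)]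
    rw [hfull, hpartial, hnone, add_zero]
  · rw [Finset.disjoint_left]
    intro i
    simp only [Finset.mem_Icc]
    omega
  · rw [Finset.disjoint_left]
    intro i
    simp only [Finset.mem_union, Finset.mem_Icc]
    omega

/-- When `k_1` is the cutoff for bids at least `P_1`, the payments of `M_1` are the first `k_2`
bids truncated at `P_1`. -/
theorem sum_pay_eq_sum_min (n : ℕ) (b : ℕ → ℝ) (P1 : ℝ) {k1 k2 : ℕ} (h12 : k1 ≤ k2)
    (h2n : k2 ≤ n) (hge : ∀ i, 1 ≤ i → i ≤ k1 → P1 ≤ b i)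
    (hlt : ∀ i, k1 < i → i ≤ n → b i < P1) :
    ∑ i ∈ Finset.Icc 1 n, pay b P1 k1 k2 i = ∑ i ∈ Finset.Icc 1 k2, min (b i) P1 := by
  rw [← Finset.sum_subset (Finset.Icc_subset_Icc_right h2n)]
  · refine Finset.sum_congr rfl fun i hi => ?_
    rw [Finset.mem_Icc] at hi
    by_cases h : i ≤ k1
    · rw [pay, if_pos h, min_eq_right (hge i hi.1 h)]
    · rw [pay, if_neg h, if_pos hi.2, min_eq_left (hlt i (by omega) (by omega)).le]
  · intro i hi hi'
    rw [Finset.mem_Icc] at hi hi'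
    rw [pay, if_neg (by omega), if_neg (by omega)]

/-- The maximum defining `WTP_total` is attained. -/
theorem exists_WTPtotalM1_eq (n : ℕ) (b : ℕ → ℝ) (α : ℝ) (hn : 1 ≤ n) :
    ∃ i, 1 ≤ i ∧ i ≤ n ∧
      WTPtotalM1 n b α = ∑ j ∈ Finset.Icc 1 i, min (b j) ((1 + α) * b i) := by
  let S : Set ℝ := {x : ℝ | ∃ i, 1 ≤ i ∧ i ≤ n ∧
    x = ∑ j ∈ Finset.Icc 1 i, min (b j) ((1 + α) * b i)}
  have hfin : S.Finite := by
    refine ((Set.finite_Icc 1 n).image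
      fun i => ∑ j ∈ Finset.Icc 1 i, min (b j) ((1 + α) * b i)).subset ?_
    rintro x ⟨i, h1, h2, rfl⟩
    exact ⟨i, ⟨h1, h2⟩, rfl⟩
  have hne : S.Nonempty := ⟨_, 1, le_rfl, hn, rfl⟩
  exact hne.csSup_mem hfin

/-- Truncating bids at a level between `0` and `C`, every total between `0` and the total
at `C` is reached. -/
theorem exists_sum_min_eq (b : ℕ → ℝ) (k : ℕ) {C T : ℝ} (hC : 0 ≤ C)
    (hnonneg : ∀ i, 1 ≤ i → i ≤ k → 0 ≤ b i) (hT : 0 < T)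
    (hle : T ≤ ∑ j ∈ Finset.Icc 1 k, min (b j) C) :
    ∃ P, 0 < P ∧ P ≤ C ∧ ∑ j ∈ Finset.Icc 1 k, min (b j) P = T := by
  have hzero : ∑ j ∈ Finset.Icc 1 k, min (b j) (0 : ℝ) = 0 :=
    Finset.sum_eq_zero fun j hj =>
      min_eq_right (hnonneg j (Finset.mem_Icc.1 hj).1 (Finset.mem_Icc.1 hj).2)
  have hcont : Continuous fun P : ℝ => ∑ j ∈ Finset.Icc 1 k, min (b j) P := by fun_prop
  obtain ⟨P, hP, hPT⟩ := intermediate_value_Icc hC hcont.continuousOn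
    (show T ∈ Set.Icc _ _ from ⟨by simpa only [hzero] using hT.le, hle⟩)
  refine ⟨P, lt_of_le_of_ne hP.1 ?_, hP.2, hPT⟩
  rintro rfl
  exact hT.ne (hzero.symm.trans hPT)

/-- existence of feasible parameters, budget balance of `M_1`: if
`0 < P_total ≤ WTP_total`, there is a feasible parameter group `(P_1, P_2, k_1, k_2)`
with `k_2 ≥ 1`; consequently the payments of `M_1` sum exactly to `P_total`. -/
theorem stmt8 (n : ℕ) (b : ℕ → ℝ) (α Ptotal : ℝ)
    (hn : 1 ≤ n) (hα : 0 < α) (hb1 : 0 < b 1)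
    (hmono : ∀ i j, 1 ≤ i → i ≤ j → j ≤ n → b j ≤ b i)
    (hnonneg : ∀ i, 1 ≤ i → i ≤ n → 0 ≤ b i)
    (hPt : 0 < Ptotal) (hle : Ptotal ≤ WTPtotalM1 n b α) :
    ∃ (P1 : ℝ) (k1 k2 : ℕ),
      Feasible n b α Ptotal P1 k1 k2 ∧ 1 ≤ k2 ∧
      ∑ i ∈ Finset.Icc 1 n, pay b P1 k1 k2 i = Ptotal := by
  obtain ⟨i, hi1, hin, hi⟩ := exists_WTPtotalM1_eq n b α hn
  let Affordable : ℕ → Prop := fun i =>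
    1 ≤ i ∧ Ptotal ≤ ∑ j ∈ Finset.Icc 1 i, min (b j) ((1 + α) * b i)
  obtain ⟨k, hkn, ⟨hk1, hk⟩, hmax⟩ : ∃ k, k ≤ n ∧ Affordable k ∧
      ∀ m, k < m → m ≤ n → ¬ Affordable m :=
    ⟨Nat.findGreatest Affordable n, Nat.findGreatest_le n,
      Nat.findGreatest_spec (P := Affordable) hin ⟨hi1, hi ▸ hle⟩,
      fun m h1 h2 => Nat.findGreatest_is_greatest h1 h2⟩
  have hα' : 0 < 1 + α := by linarith
  obtain ⟨P, hP, hPk, hsum⟩ := exists_sum_min_eq b k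
    (mul_nonneg hα'.le (hnonneg k hk1 hkn)) (fun j h1 h2 => hnonneg j h1 (h2.trans hkn)) hPt hk
  have hdiv : P / (1 + α) < P := div_lt_self hP (by linarith)
  have habove : ∀ m, k < m → m ≤ n → b m < P / (1 + α) := by
    intro m hkm hmn
    by_contra! hbm
    refine hmax m hkm hmn ⟨by omega, ?_⟩
    rw [div_le_iff₀' hα'] at hbm
    rw [← hsum]
    calc ∑ j ∈ Finset.Icc 1 k, min (b j) P
        ≤ ∑ j ∈ Finset.Icc 1 k, min (b j) ((1 + α) * b m) :=
          Finset.sum_le_sum fun j _ => min_le_min_left _ hbm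
      _ ≤ ∑ j ∈ Finset.Icc 1 m, min (b j) ((1 + α) * b m) := by
          refine Finset.sum_le_sum_of_subset_of_nonneg
            (Finset.Icc_subset_Icc_right hkm.le) fun j hj _ => ?_
          rw [Finset.mem_Icc] at hj
          exact le_min (hnonneg j hj.1 (hj.2.trans hmn)) (hP.le.trans hbm)
  obtain ⟨k1, hk1k, hspec, hbelow⟩ : ∃ k1, k1 ≤ k ∧ (k1 ≠ 0 → P ≤ b k1) ∧
      ∀ m, k1 < m → m ≤ k → ¬ P ≤ b m :=
    ⟨Nat.findGreatest (fun m => P ≤ b m) k, Nat.findGreatest_le k,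
      fun h => Nat.findGreatest_of_ne_zero rfl h,
      fun m h1 h2 => Nat.findGreatest_is_greatest h1 h2⟩
  have hge : ∀ m, 1 ≤ m → m ≤ k1 → P ≤ b m := fun m h1 h2 =>
    (hspec (by omega)).trans (hmono m k1 h1 h2 (hk1k.trans hkn))
  have hlt : ∀ m, k1 < m → m ≤ n → b m < P := by
    intro m h1 h2
    rcases le_or_gt m k with h | h
    · exact not_le.1 (hbelow m h1 h)
    · exact (habove m h h2).trans hdiv
  have hpay : ∑ i ∈ Finset.Icc 1 n, pay b P k1 k i = Ptotal :=
    (sum_pay_eq_sum_min n b P hk1k hkn hge hlt).trans hsum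
  refine ⟨P, k1, k, ⟨hP, hk1k, hkn, hge, hlt, fun m h1 h2 => ?_, habove, ?_⟩, hk1, hpay⟩
  · exact ((div_le_iff₀' hα').2 hPk).trans (hmono m k h1 h2 hkn)
  · rw [← sum_pay_eq n b P hk1k hkn, hpay]

end
end

section
/- For every integer a ≥ 1, let n = 2^a and let the DAO's member valuations be v_i = n/i for i = 1,…,n. Then the ungrouped (degenerate) total willingness to pay is max_{1≤i≤n} i·v_i = n, while the continuous grouping consisting of G^1 = {1} and G^j = {2^{j−2}+1, …, 2^{j−1}} for j = 2,…,a+1 has WTP(G^1) = n, WTP(G^j) = n/2 for j ≥ 2, and total willingness to pay WTP_total = n·(a+1)/2. In particular opt_WTP ≥ n·(a+1)/2, a logarithmic-factor improvement over the ungrouped willingness to pay. -/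
open scoped Classical

noncomputable section

/-- If `v i = n / i` on `{m + 1, …, 2m}`, the willingness to pay of this block is `n / 2`. -/
theorem WTP_Icc_double {v : ℕ → ℝ} {n m : ℕ} (hm : 0 < m) (hmn : 2 * m ≤ n)
    (hv : ∀ i, 1 ≤ i → i ≤ n → v i = (n : ℝ) / (i : ℝ)) :
    WTP v (Finset.Icc (m + 1) (2 * m)) = (n : ℝ) / 2 := by
  have value : ∀ i ∈ Finset.Icc (m + 1) (2 * m),
      (((Finset.Icc (m + 1) (2 * m)).filter (fun c => c ≤ i)).card : ℝ) * v i =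
        ((i : ℝ) - m) * (n / i) := by
    intro i hi
    rw [Finset.mem_Icc] at hi
    have rank : (Finset.Icc (m + 1) (2 * m)).filter (fun c => c ≤ i) = Finset.Icc (m + 1) i := by
      ext c
      simp only [Finset.mem_filter, Finset.mem_Icc]
      omega
    rw [rank, Nat.card_Icc, hv i (by omega) (by omega), Nat.add_sub_add_right,
      Nat.cast_sub (by omega)]
  have hm' : (0 : ℝ) < m := by exact_mod_cast hm
  refine IsGreatest.csSup_eq ⟨⟨2 * m, ?_, ?_⟩, ?_⟩
  · simp only [Finset.coe_Icc, Set.mem_Icc]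
    omega
  · refine (value (2 * m) (by rw [Finset.mem_Icc]; omega)).trans ?_
    push_cast
    field_simp
    ring
  · rintro _ ⟨i, hi, rfl⟩
    rw [Finset.mem_coe] at hi
    refine (value i hi).le.trans ?_
    rw [Finset.mem_Icc] at hi
    have hi₀ : (0 : ℝ) < i := by exact_mod_cast (by omega : 0 < i)
    have hi₂ : (i : ℝ) ≤ 2 * m := by exact_mod_cast hi.2
    rw [← mul_div_assoc, div_le_div_iff₀ hi₀ two_pos]
    nlinarith [(Nat.cast_nonneg n : (0 : ℝ) ≤ n)]

theorem WTP_singleton (v : ℕ → ℝ) (i : ℕ) : WTP v {i} = v i := by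
  simp [WTP, Finset.filter_singleton]

/-- The grouping of `{1, …, 2 ^ a}` into `{1}` and the dyadic blocks
`{2 ^ (j - 2) + 1, …, 2 ^ (j - 1)}`. -/
def dyadicGrouping (a : ℕ) : Finset (Finset ℕ) :=
  {Finset.Icc 1 1} ∪
    (Finset.Icc 2 (a + 1)).image (fun j => Finset.Icc (2 ^ (j - 2) + 1) (2 ^ (j - 1)))

theorem mem_dyadicGrouping {a : ℕ} {G : Finset ℕ} :
    G ∈ dyadicGrouping a ↔
      G = {1} ∨ ∃ k < a, G = Finset.Icc (2 ^ k + 1) (2 * 2 ^ k) := by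
  simp only [dyadicGrouping, Finset.mem_union, Finset.mem_singleton, Finset.mem_image,
    Finset.mem_Icc, Finset.Icc_self]
  refine or_congr_right ⟨?_, ?_⟩
  · rintro ⟨j, ⟨hj, hja⟩, rfl⟩
    obtain ⟨k, rfl⟩ := Nat.exists_eq_add_of_le' hj
    exact ⟨k, by omega, by simp [pow_succ']⟩
  · rintro ⟨k, hk, rfl⟩
    exact ⟨k + 2, by omega, by simp [pow_succ']⟩

theorem disjoint_dyadicBlock {k l : ℕ} (h : k < l) :
    Disjoint (Finset.Icc (2 ^ k + 1) (2 * 2 ^ k)) (Finset.Icc (2 ^ l + 1) (2 * 2 ^ l)) := by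
  have hkl : 2 ^ (k + 1) ≤ 2 ^ l := Nat.pow_le_pow_right two_pos h
  rw [pow_succ'] at hkl
  rw [Finset.disjoint_left]
  intro x hx hx'
  rw [Finset.mem_Icc] at hx hx'
  omega

theorem disjoint_singleton_one_dyadicBlock (k : ℕ) :
    Disjoint ({1} : Finset ℕ) (Finset.Icc (2 ^ k + 1) (2 * 2 ^ k)) := by
  simp

theorem dyadicBlock_nonempty (k : ℕ) : (Finset.Icc (2 ^ k + 1) (2 * 2 ^ k)).Nonempty := by
  have := Nat.two_pow_pos k
  exact Finset.nonempty_Icc.2 (by omega)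

theorem isGrouping_dyadicGrouping (a : ℕ) : IsGrouping (2 ^ a) (dyadicGrouping a) := by
  refine ⟨?_, ?_, ?_⟩
  · intro G hG
    obtain rfl | ⟨k, -, rfl⟩ := mem_dyadicGrouping.1 hG
    · exact Finset.singleton_nonempty 1
    · exact dyadicBlock_nonempty k
  · intro G hG H hH hGH
    change Disjoint G H
    obtain rfl | ⟨k, -, rfl⟩ := mem_dyadicGrouping.1 (Finset.mem_coe.1 hG) <;>
      obtain rfl | ⟨l, -, rfl⟩ := mem_dyadicGrouping.1 (Finset.mem_coe.1 hH)
    · exact absurd rfl hGH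
    · exact disjoint_singleton_one_dyadicBlock l
    · exact (disjoint_singleton_one_dyadicBlock k).symm
    · obtain h | rfl | h := lt_trichotomy k l
      · exact disjoint_dyadicBlock h
      · exact absurd rfl hGH
      · exact (disjoint_dyadicBlock h).symm
  · ext x
    simp only [Finset.mem_sup, id, Finset.mem_Icc]
    constructor
    · rintro ⟨G, hG, hx⟩
      obtain rfl | ⟨k, hk, rfl⟩ := mem_dyadicGrouping.1 hG
      · rw [Finset.mem_singleton.1 hx]
        exact ⟨le_rfl, Nat.one_le_two_pow⟩
      · have hka : 2 ^ (k + 1) ≤ 2 ^ a := Nat.pow_le_pow_right two_pos hk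
        rw [pow_succ'] at hka
        rw [Finset.mem_Icc] at hx
        omega
    · rintro ⟨hx, hxa⟩
      obtain rfl | hx := hx.eq_or_lt
      · exact ⟨{1}, mem_dyadicGrouping.2 (.inl rfl), Finset.mem_singleton_self 1⟩
      · have hlow := Nat.pow_log_le_self 2 (by omega : x - 1 ≠ 0)
        have hhigh := Nat.lt_pow_succ_log_self one_lt_two (x - 1)
        rw [pow_succ'] at hhigh
        refine ⟨_, mem_dyadicGrouping.2 (.inr ⟨Nat.log 2 (x - 1), ?_, rfl⟩), ?_⟩
        · exact Nat.log_lt_of_lt_pow (by omega) (by omega)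
        · rw [Finset.mem_Icc]
          omega

theorem continuousGrouping_dyadicGrouping (a : ℕ) : ContinuousGrouping (dyadicGrouping a) := by
  intro G hG x hx z hz y hxy hyz
  obtain rfl | ⟨k, -, rfl⟩ := mem_dyadicGrouping.1 hG
  · rw [Finset.mem_singleton] at *
    omega
  · rw [Finset.mem_Icc] at *
    omega

theorem card_dyadicGrouping (a : ℕ) : (dyadicGrouping a).card = a + 1 := by
  have himage : dyadicGrouping a =
      insert {1} ((Finset.range a).image fun k => Finset.Icc (2 ^ k + 1) (2 * 2 ^ k)) := by
    ext G
    simp [mem_dyadicGrouping, eq_comm]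
  rw [himage, Finset.card_insert_of_notMem, Finset.card_image_of_injective, Finset.card_range]
  · intro k l (hkl : Finset.Icc _ _ = Finset.Icc _ _)
    by_contra hne
    have hdisj := (lt_or_gt_of_ne hne).elim disjoint_dyadicBlock
      fun h => (disjoint_dyadicBlock h).symm
    rw [hkl, disjoint_self] at hdisj
    exact (dyadicBlock_nonempty l).ne_empty hdisj
  · intro hmem
    obtain ⟨k, -, hk⟩ := Finset.mem_image.1 hmem
    have hdisj := disjoint_singleton_one_dyadicBlock k
    rw [hk, disjoint_self] at hdisj
    exact Finset.singleton_ne_empty 1 hdisj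

/-- A grouping in which one subgroup has willingness to pay `x > 0` and all the others, at
least one in number, have willingness to pay `x / 2` has total willingness to pay `|𝒢| · x / 2`. -/
theorem WTPtotal_eq_of_half {v : ℕ → ℝ} {𝒢 : Finset (Finset ℕ)} {G₀ : Finset ℕ} {x : ℝ}
    (hx : 0 < x) (hG₀ : G₀ ∈ 𝒢) (hcard : 2 ≤ 𝒢.card) (htop : WTP v G₀ = x)
    (hhalf : ∀ G ∈ 𝒢, G ≠ G₀ → WTP v G = x / 2) :
    WTPtotal v 𝒢 = 𝒢.card * (x / 2) := by
  have hcard' : (2 : ℝ) ≤ 𝒢.card := by exact_mod_cast hcard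
  have rank : ∀ G ∈ 𝒢, G ≠ G₀ → 𝒢.filter (fun G' => WTP v G ≤ WTP v G') = 𝒢 := by
    intro G hG hne
    refine Finset.filter_true_of_mem fun H hH => ?_
    rw [hhalf G hG hne]
    by_cases h : H = G₀
    · rw [h, htop]
      linarith
    · rw [hhalf H hH h]
  have rank₀ : 𝒢.filter (fun G' => WTP v G₀ ≤ WTP v G') = {G₀} := by
    ext H
    rw [Finset.mem_filter, Finset.mem_singleton]
    refine ⟨fun ⟨hH, hle⟩ => ?_, ?_⟩
    · by_contra h
      rw [htop, hhalf H hH h] at hle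
      linarith
    · rintro rfl
      exact ⟨hG₀, le_rfl⟩
  refine IsGreatest.csSup_eq ⟨?_, ?_⟩
  · obtain ⟨G, hG, hne⟩ := Finset.exists_mem_ne (by omega : 1 < 𝒢.card) G₀
    refine ⟨G, hG, ?_⟩
    dsimp only
    rw [rank G hG hne, hhalf G hG hne]
  · rintro _ ⟨G, hG, rfl⟩
    rw [Finset.mem_coe] at hG
    by_cases h : G = G₀
    · subst h
      dsimp only
      rw [rank₀, htop, Finset.card_singleton, Nat.cast_one]
      nlinarith
    · dsimp only
      rw [rank G hG h, hhalf G hG h]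

/-- the example of Fig. 2: for `n = 2^a` with `a ≥ 1` and valuations
`v_i = n/i`, the ungrouped total willingness to pay `max_{1≤i≤n} i·v_i` equals `n`,
while the continuous grouping `G^1 = {1}`, `G^j = {2^{j-2}+1, …, 2^{j-1}}` for
`j = 2,…,a+1` has `WTP(G^1) = n`, `WTP(G^j) = n/2` for `j ≥ 2`, and total willingness
to pay `n·(a+1)/2`.  In particular `opt_WTP ≥ n·(a+1)/2`. -/
theorem stmt12 (a : ℕ) (ha : 1 ≤ a) (n : ℕ) (hn : n = 2 ^ a) (v : ℕ → ℝ)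
    (hv : ∀ i, 1 ≤ i → i ≤ n → v i = (n : ℝ) / (i : ℝ)) :
    sSup {x : ℝ | ∃ i, 1 ≤ i ∧ i ≤ n ∧ x = (i : ℝ) * v i} = (n : ℝ) ∧
    ∃ 𝒢 : Finset (Finset ℕ),
      𝒢 = {Finset.Icc 1 1} ∪
            (Finset.Icc 2 (a + 1)).image
              (fun j => Finset.Icc (2 ^ (j - 2) + 1) (2 ^ (j - 1))) ∧
      IsGrouping n 𝒢 ∧ ContinuousGrouping 𝒢 ∧
      WTP v (Finset.Icc 1 1) = (n : ℝ) ∧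
      (∀ j, 2 ≤ j → j ≤ a + 1 →
        WTP v (Finset.Icc (2 ^ (j - 2) + 1) (2 ^ (j - 1))) = (n : ℝ) / 2) ∧
      WTPtotal v 𝒢 = (n : ℝ) * (a + 1) / 2 ∧
      (∀ W : ℝ,
        IsGreatest {W' : ℝ | ∃ 𝒢' : Finset (Finset ℕ), IsGrouping n 𝒢' ∧ WTPtotal v 𝒢' = W'} W →
        (n : ℝ) * (a + 1) / 2 ≤ W) := by
  have hn₁ : 1 ≤ n := hn ▸ Nat.one_le_two_pow
  have hgroup : IsGrouping n (dyadicGrouping a) := hn ▸ isGrouping_dyadicGrouping a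
  have hone : WTP v {1} = (n : ℝ) := by
    rw [WTP_singleton, hv 1 le_rfl hn₁, Nat.cast_one, div_one]
  have hblock : ∀ k < a, WTP v (Finset.Icc (2 ^ k + 1) (2 * 2 ^ k)) = (n : ℝ) / 2 := by
    intro k hk
    refine WTP_Icc_double (Nat.two_pow_pos k) ?_ hv
    rw [← pow_succ', hn]
    exact Nat.pow_le_pow_right two_pos hk
  have htotal : WTPtotal v (dyadicGrouping a) = (n : ℝ) * (a + 1) / 2 := by
    rw [WTPtotal_eq_of_half (G₀ := {1}) (x := n) (by exact_mod_cast hn₁)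
      (mem_dyadicGrouping.2 (.inl rfl)) (by rw [card_dyadicGrouping]; omega) hone,
      card_dyadicGrouping]
    · push_cast
      ring
    · intro G hG hne
      obtain rfl | ⟨k, hk, rfl⟩ := mem_dyadicGrouping.1 hG
      · exact absurd rfl hne
      · exact hblock k hk
  have hmul : ∀ i, 1 ≤ i → i ≤ n → (i : ℝ) * v i = n := by
    intro i hi hin
    rw [hv i hi hin, mul_div_cancel₀]
    exact_mod_cast (by omega : i ≠ 0)
  refine ⟨IsGreatest.csSup_eq ⟨⟨1, le_rfl, hn₁, (hmul 1 le_rfl hn₁).symm⟩, ?_⟩,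
    dyadicGrouping a, rfl, hgroup, continuousGrouping_dyadicGrouping a, hone, ?_, htotal,
    fun W hW => hW.2 ⟨dyadicGrouping a, hgroup, htotal⟩⟩
  · rintro _ ⟨i, hi, hin, rfl⟩
    exact (hmul i hi hin).le
  · intro j hj hja
    obtain ⟨k, rfl⟩ := Nat.exists_eq_add_of_le' hj
    simpa [pow_succ'] using hblock k (by omega)

end
end

section
/- Fix α > 0, true values v_1,…,v_n > 0 of the DAO's members, a highest competing bid P > 0, and the other members' bids b_{−i}. Consider mechanism M_1 in rank-free form, where in each winning scenario a minimal feasible P_1 exists and is selected. Suppose both the truthful profile (v_i, b_{−i}) and an underbidding profile (b_i', b_{−i}) with 0 < b_i' < v_i are generic, i.e. WTP_total ≠ P under each profile. Then member i's collective utility under truthful bidding is at least its collective utility under underbidding: u_i(v_i, b_{−i}) ≥ u_i(b_i', b_{−i}). -/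
open scoped Classical

noncomputable section

/-- The aggregation function of mechanism `M_1` in rank-free form: for a bid profile
`b` and collectivism parameter `α`, `WTP_total(b)` is the max over thresholds
`t ∈ {b_1, …, b_n}` of `Σ_{j : b_j ≥ t} min(b_j, (1+α)·t)`. -/
def wtpTotalRF (n : ℕ) (α : ℝ) (b : Fin n → ℝ) : ℝ :=
  sSup {x : ℝ | ∃ t : Fin n,
    x = ∑ j ∈ Finset.univ.filter (fun j => b t ≤ b j), min (b j) ((1 + α) * b t)}

/-- `P_1 > 0` is feasible for profile `b` at price `P` if
`Σ_{i : b_i ≥ P_1/(1+α)} min(b_i, P_1) = P`. -/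
def FeasibleP1 (n : ℕ) (α P : ℝ) (b : Fin n → ℝ) (P1 : ℝ) : Prop :=
  0 < P1 ∧
  ∑ j ∈ Finset.univ.filter (fun j => P1 / (1 + α) ≤ b j), min (b j) P1 = P

/-- The access of member `j` in the rank-free `M_1` when the DAO wins with selected
price `P_1`: `min(1, b_j/P_1)` if `b_j ≥ P_1/(1+α)`, otherwise `0`. -/
def xRF (n : ℕ) (α : ℝ) (b : Fin n → ℝ) (P1 : ℝ) (j : Fin n) : ℝ :=
  if P1 / (1 + α) ≤ b j then min 1 (b j / P1) else 0

/-- The payment of member `j` in the rank-free `M_1` when the DAO wins with selected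
price `P_1`: `min(b_j, P_1)` if `b_j ≥ P_1/(1+α)`, otherwise `0`. -/
def pRF (n : ℕ) (α : ℝ) (b : Fin n → ℝ) (P1 : ℝ) (j : Fin n) : ℝ :=
  if P1 / (1 + α) ≤ b j then min (b j) P1 else 0

/-- The access of member `j` in the rank-free `M_1` at highest competing bid `P`:
if the DAO wins (`WTP_total(b) ≥ P`) this is `xRF` with the selected `P_1`,
otherwise `0`. -/
def outX (n : ℕ) (α : ℝ) (b : Fin n → ℝ) (P P1 : ℝ) (j : Fin n) : ℝ :=
  if P ≤ wtpTotalRF n α b then xRF n α b P1 j else 0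

/-- The payment of member `j` in the rank-free `M_1` at highest competing bid `P`:
if the DAO wins (`WTP_total(b) ≥ P`) this is `pRF` with the selected `P_1`,
otherwise `0`. -/
def outP (n : ℕ) (α : ℝ) (b : Fin n → ℝ) (P P1 : ℝ) (j : Fin n) : ℝ :=
  if P ≤ wtpTotalRF n α b then pRF n α b P1 j else 0

/-- The collective utility (extended-real valued) of member `i` with true values `v`,
accesses `x` and payments `p`: `v_i·x_i − p_i + α·Σ_j v_j·x_j` if `x_i > 0` and
`p_i ≤ v_i`; `−∞` if `p_i > v_i`; and `−p_i` if `x_i = 0`. -/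
def utilRF (n : ℕ) (α : ℝ) (v : Fin n → ℝ) (x p : Fin n → ℝ) (i : Fin n) : EReal :=
  if v i < p i then ⊥
  else if 0 < x i then ((v i * x i - p i + α * ∑ j, v j * x j : ℝ) : EReal)
  else ((-(p i) : ℝ) : EReal)

/-- The total payment collected at the candidate price `q`. -/
def revenueRF (n : ℕ) (α : ℝ) (b : Fin n → ℝ) (q : ℝ) : ℝ :=
  ∑ j ∈ Finset.univ.filter (fun j => q / (1 + α) ≤ b j), min (b j) q

theorem revenueRF_mono {n : ℕ} {α q : ℝ} {b c : Fin n → ℝ} (hc : ∀ j, 0 < c j) (hbc : b ≤ c)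
    (hq : 0 < q) : revenueRF n α b q ≤ revenueRF n α c q := by
  unfold revenueRF
  calc _ ≤ ∑ j ∈ Finset.univ.filter (fun j => q / (1 + α) ≤ b j), min (c j) q :=
        Finset.sum_le_sum fun j _ => min_le_min_right _ (hbc j)
    _ ≤ _ := by
        refine Finset.sum_le_sum_of_subset_of_nonneg ?_ fun j _ _ => le_min (hc j).le hq.le
        exact Finset.monotone_filter_right _ fun j _ hj => le_trans hj (hbc j)

/-- A positive revenue never exceeds `WTP_total`: raise the price to `1 + α` times the lowest
included bid. -/
theorem revenueRF_le_wtpTotalRF {n : ℕ} {α q : ℝ} {b : Fin n → ℝ} (hα : 0 < α)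
    (h : 0 < revenueRF n α b q) : revenueRF n α b q ≤ wtpTotalRF n α b := by
  have hα1 : 0 < 1 + α := by linarith
  have hne : (Finset.univ.filter (fun j => q / (1 + α) ≤ b j)).Nonempty := by
    by_contra hempty
    rw [Finset.not_nonempty_iff_eq_empty] at hempty
    simp [revenueRF, hempty] at h
  obtain ⟨t, ht, hmin⟩ := Finset.exists_min_image _ b hne
  have htq : q / (1 + α) ≤ b t := (Finset.mem_filter.mp ht).2
  have hfilter : Finset.univ.filter (fun j => q / (1 + α) ≤ b j) =
      Finset.univ.filter (fun j => b t ≤ b j) := by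
    ext j
    simp only [Finset.mem_filter, Finset.mem_univ, true_and]
    exact ⟨fun hj => hmin j (by simpa using hj), htq.trans⟩
  have hq : q ≤ (1 + α) * b t := by
    rw [div_le_iff₀ hα1] at htq
    linarith
  have hbdd : BddAbove {x : ℝ | ∃ t : Fin n,
      x = ∑ j ∈ Finset.univ.filter (fun j => b t ≤ b j), min (b j) ((1 + α) * b t)} := by
    refine ((Set.finite_range fun t : Fin n =>
      ∑ j ∈ Finset.univ.filter (fun j => b t ≤ b j), min (b j) ((1 + α) * b t)).subset
        ?_).bddAbove
    rintro x ⟨t, rfl⟩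
    exact ⟨t, rfl⟩
  refine le_trans ?_ (le_csSup hbdd ⟨t, rfl⟩)
  rw [revenueRF, hfilter]
  exact Finset.sum_le_sum fun j _ => min_le_min_left _ hq

/-- Lowering the price with the included set held fixed attains `P` by continuity; the included
set can only grow, so iterating terminates at a feasible price. -/
theorem exists_feasibleP1_le {n : ℕ} {α P : ℝ} {b : Fin n → ℝ} (hα : 0 < α) (hP : 0 < P)
    (hb : ∀ j, 0 < b j) {q : ℝ} (hq : 0 < q) (h : P ≤ revenueRF n α b q) :
    ∃ r ≤ q, FeasibleP1 n α P b r := by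
  have hα1 : 0 < 1 + α := by linarith
  induction hk : n - (Finset.univ.filter (fun j => q / (1 + α) ≤ b j)).card
    using Nat.strong_induction_on generalizing q with
  | _ k ih =>
    set T := Finset.univ.filter (fun j => q / (1 + α) ≤ b j) with hT
    have hcont : Continuous fun r : ℝ => ∑ j ∈ T, min (b j) r := by fun_prop
    have hzero : ∑ j ∈ T, min (b j) 0 = 0 :=
      Finset.sum_eq_zero fun j _ => min_eq_right (hb j).le
    obtain ⟨r, ⟨hr0, hrq⟩, hr⟩ := intermediate_value_Icc hq.le hcont.continuousOn
      (show P ∈ Set.Icc (∑ j ∈ T, min (b j) 0) (∑ j ∈ T, min (b j) q) from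
        ⟨by rw [hzero]; exact hP.le, h⟩)
    dsimp only at hr
    have hrpos : 0 < r := by
      refine lt_of_le_of_ne hr0 ?_
      rintro rfl
      linarith
    have hsub : T ⊆ Finset.univ.filter (fun j => r / (1 + α) ≤ b j) :=
      Finset.monotone_filter_right _ fun j _ hj =>
        le_trans (div_le_div_of_nonneg_right hrq hα1.le) hj
    by_cases heq : T = Finset.univ.filter (fun j => r / (1 + α) ≤ b j)
    · exact ⟨r, hrq, hrpos, by rw [← heq]; exact hr⟩
    · have hcard := Finset.card_lt_card (hsub.ssubset_of_ne heq)
      have hle : (Finset.univ.filter (fun j => r / (1 + α) ≤ b j)).card ≤ n := by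
        simpa using Finset.card_le_univ (Finset.univ.filter (fun j => r / (1 + α) ≤ b j))
      have hrev : P ≤ revenueRF n α b r := by
        rw [← hr]
        exact Finset.sum_le_sum_of_subset_of_nonneg hsub fun j _ _ => le_min (hb j).le hr0
      obtain ⟨s, hsr, hs⟩ := ih _ (by omega) hrpos hrev rfl
      exact ⟨s, hsr.trans hrq, hs⟩

theorem xRF_nonneg {n : ℕ} {α q : ℝ} {b : Fin n → ℝ} (hb : ∀ j, 0 < b j) (hq : 0 < q)
    (j : Fin n) : 0 ≤ xRF n α b q j := by
  unfold xRF
  split_ifs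
  · exact le_min zero_le_one (div_pos (hb j) hq).le
  · exact le_rfl

/-- Access increases with the bids and decreases with the price. -/
theorem xRF_le_xRF {n : ℕ} {α q r : ℝ} {b c : Fin n → ℝ} (hα : 0 < α) (hc : ∀ j, 0 < c j)
    (hbc : b ≤ c) (hr : 0 < r) (hrq : r ≤ q) (j : Fin n) :
    xRF n α b q j ≤ xRF n α c r j := by
  by_cases h : q / (1 + α) ≤ b j
  · have h' : r / (1 + α) ≤ c j :=
      (div_le_div_of_nonneg_right hrq (by linarith)).trans (h.trans (hbc j))
    rw [xRF, xRF, if_pos h, if_pos h']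
    exact min_le_min_left _ (div_le_div₀ (hc j).le (hbc j) hr hrq)
  · rw [xRF, if_neg h]
    exact xRF_nonneg hc hr j

/-- Every member pays the price times its access. -/
theorem pRF_eq_mul_xRF {n : ℕ} {α q : ℝ} {b : Fin n → ℝ} (hq : 0 < q) (j : Fin n) :
    pRF n α b q j = q * xRF n α b q j := by
  unfold pRF xRF
  split_ifs
  · rw [mul_min_of_nonneg _ _ hq.le, mul_one, mul_div_cancel₀ _ hq.ne', min_comm]
  · rw [mul_zero]

theorem pRF_le_bid {n : ℕ} {α q : ℝ} {b : Fin n → ℝ} (hb : ∀ j, 0 < b j) (j : Fin n) :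
    pRF n α b q j ≤ b j := by
  unfold pRF
  split_ifs
  · exact min_le_left _ _
  · exact (hb j).le

theorem le_mul_of_xRF_pos {n : ℕ} {α q : ℝ} {b : Fin n → ℝ} (hα : 0 < α) {j : Fin n}
    (h : 0 < xRF n α b q j) : q ≤ (1 + α) * b j := by
  unfold xRF at h
  split_ifs at h with hj
  · rwa [div_le_iff₀' (by linarith)] at hj
  · exact absurd h (lt_irrefl 0)

/-- When the payments are the price times the access, utility separates into the member's own
share and the collective benefit from the others. -/
theorem util_eq_own_add_others {n : ℕ} {α q : ℝ} {v x p : Fin n → ℝ} {i : Fin n}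
    (hp : p i = q * x i) :
    v i * x i - p i + α * ∑ j, v j * x j =
      x i * ((1 + α) * v i - q) + α * ∑ j ∈ Finset.univ.erase i, v j * x j := by
  rw [hp, ← Finset.add_sum_erase _ _ (Finset.mem_univ i)]
  ring

theorem utilRF_zero {n : ℕ} {α : ℝ} {v : Fin n → ℝ} (hv : ∀ j, 0 < v j) {x p : Fin n → ℝ}
    {i : Fin n} (hx : x i = 0) (hp : p i = 0) : utilRF n α v x p i = 0 := by
  simp [utilRF, hx, hp, (hv i).le]

/-- A truthful bidder's utility is nonnegative. -/
theorem utilRF_truthful_nonneg {n : ℕ} {α q : ℝ} {v b : Fin n → ℝ} (hα : 0 < α)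
    (hv : ∀ j, 0 < v j) (hb : ∀ j, 0 < b j) {i : Fin n} (hi : b i = v i) (hq : 0 < q) :
    0 ≤ utilRF n α v (xRF n α b q) (pRF n α b q) i := by
  have hp := pRF_eq_mul_xRF (α := α) (b := b) hq i
  rcases (xRF_nonneg (α := α) hb hq i).eq_or_lt with hx | hx
  · rw [utilRF_zero hv hx.symm (by rw [hp, ← hx, mul_zero])]
  · have hpv : ¬ v i < pRF n α b q i := not_lt.mpr (hi ▸ pRF_le_bid hb i)
    rw [utilRF, if_neg hpv, if_pos hx, util_eq_own_add_others hp]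
    have hqv : q ≤ (1 + α) * v i := hi ▸ le_mul_of_xRF_pos hα hx
    have hsum : 0 ≤ ∑ j ∈ Finset.univ.erase i, v j * xRF n α b q j :=
      Finset.sum_nonneg fun j _ => mul_nonneg (hv j).le (xRF_nonneg hb hq j)
    exact_mod_cast add_nonneg (mul_nonneg hx.le (sub_nonneg.mpr hqv)) (mul_nonneg hα.le hsum)

/-- no profitable underbidding in generic games: fix `α > 0`, true
values `v > 0`, a highest competing bid `P > 0` and the others' bids.  If the truthful
profile `(v_i, b_{-i})` and an underbidding profile `(b_i', b_{-i})` with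
`0 < b_i' < v_i` are both generic (`WTP_total ≠ P`), and in each winning scenario a
minimal feasible `P_1` exists and is selected, then member `i`'s collective utility
under truthful bidding is at least that under underbidding. -/
theorem stmt14 (n : ℕ) (α P : ℝ) (hα : 0 < α) (hP : 0 < P)
    (v : Fin n → ℝ) (hv : ∀ j, 0 < v j) (i : Fin n)
    (b : Fin n → ℝ) (hb : ∀ j, 0 < b j)
    (b' : ℝ) (hb'pos : 0 < b') (hb'lt : b' < v i)
    (B1 B2 : Fin n → ℝ)
    (hB1 : B1 = Function.update b i (v i))
    (hB2 : B2 = Function.update b i b')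
    (hgen1 : wtpTotalRF n α B1 ≠ P)
    (hgen2 : wtpTotalRF n α B2 ≠ P)
    (P1a P1b : ℝ)
    (hsel1 : P ≤ wtpTotalRF n α B1 → IsLeast {q : ℝ | FeasibleP1 n α P B1 q} P1a)
    (hsel2 : P ≤ wtpTotalRF n α B2 → IsLeast {q : ℝ | FeasibleP1 n α P B2 q} P1b) :
    utilRF n α v (outX n α B2 P P1b) (outP n α B2 P P1b) i ≤
      utilRF n α v (outX n α B1 P P1a) (outP n α B1 P P1a) i := by
  have hB1pos : ∀ j, 0 < B1 j := by
    intro j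
    rw [hB1, Function.update_apply]
    split_ifs
    exacts [hv i, hb j]
  have hB2pos : ∀ j, 0 < B2 j := by
    intro j
    rw [hB2, Function.update_apply]
    split_ifs
    exacts [hb'pos, hb j]
  have hle : B2 ≤ B1 := by
    rw [hB1, hB2]
    exact update_le_update_iff.mpr ⟨hb'lt.le, fun j _ => le_rfl⟩
  have hB1i : B1 i = v i := by simp [hB1]
  have hB2i : B2 i ≤ v i := hB1i ▸ hle i
  have htruth : 0 ≤ utilRF n α v (outX n α B1 P P1a) (outP n α B1 P P1a) i := by
    by_cases hwin : P ≤ wtpTotalRF n α B1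
    · have hX : outX n α B1 P P1a = xRF n α B1 P1a := funext fun j => if_pos hwin
      have hPay : outP n α B1 P P1a = pRF n α B1 P1a := funext fun j => if_pos hwin
      rw [hX, hPay]
      exact utilRF_truthful_nonneg hα hv hB1pos hB1i (hsel1 hwin).1.1
    · rw [utilRF_zero hv (if_neg hwin) (if_neg hwin)]
  by_cases hwin2 : P ≤ wtpTotalRF n α B2
  swap
  · rw [utilRF_zero hv (if_neg hwin2) (if_neg hwin2)]
    exact htruth
  obtain ⟨⟨hbpos, hbrev⟩, -⟩ := hsel2 hwin2
  have hrev : P ≤ revenueRF n α B1 P1b := by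
    rw [← hbrev]
    exact revenueRF_mono hB1pos hle hbpos
  have hwin1 : P ≤ wtpTotalRF n α B1 :=
    hrev.trans (revenueRF_le_wtpTotalRF hα (hP.trans_le hrev))
  obtain ⟨⟨hapos, -⟩, hamin⟩ := hsel1 hwin1
  have hab : P1a ≤ P1b := by
    obtain ⟨r, hr, hfeas⟩ := exists_feasibleP1_le hα hP hB1pos hbpos hrev
    exact (hamin hfeas).trans hr
  have hX1 : outX n α B1 P P1a = xRF n α B1 P1a := funext fun j => if_pos hwin1
  have hP1 : outP n α B1 P P1a = pRF n α B1 P1a := funext fun j => if_pos hwin1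
  have hX2 : outX n α B2 P P1b = xRF n α B2 P1b := funext fun j => if_pos hwin2
  have hP2 : outP n α B2 P P1b = pRF n α B2 P1b := funext fun j => if_pos hwin2
  rw [hX1, hP1] at htruth ⊢
  rw [hX2, hP2]
  have hp1 := pRF_eq_mul_xRF (α := α) (b := B1) hapos i
  have hp2 := pRF_eq_mul_xRF (α := α) (b := B2) hbpos i
  rcases (xRF_nonneg (α := α) hB2pos hbpos i).eq_or_lt with hx | hx
  · rw [utilRF_zero hv hx.symm (by rw [hp2, ← hx, mul_zero])]
    exact htruth
  have hacc := xRF_le_xRF hα hB1pos hle hapos hab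
  rw [utilRF, if_neg (not_lt.mpr ((pRF_le_bid hB2pos i).trans hB2i)), if_pos hx, utilRF,
    if_neg (not_lt.mpr (hB1i ▸ pRF_le_bid hB1pos i)), if_pos (hx.trans_le (hacc i)),
    util_eq_own_add_others hp1, util_eq_own_add_others hp2, EReal.coe_le_coe_iff]
  have hbv : P1b ≤ (1 + α) * v i :=
    (le_mul_of_xRF_pos hα hx).trans (mul_le_mul_of_nonneg_left hB2i (by linarith))
  refine add_le_add (mul_le_mul (hacc i) (by linarith) (by linarith) (hx.le.trans (hacc i)))
    (mul_le_mul_of_nonneg_left ?_ hα.le)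
  exact Finset.sum_le_sum fun j _ => mul_le_mul_of_nonneg_left (hacc j) (hv j).le

end
end

section
/- Fix α > 0, true values v_1,…,v_n > 0 of the DAO's members, a highest competing bid P > 0, and the other members' bids b_{−i}. Consider mechanism M_1 in rank-free form, where in each winning scenario a minimal feasible P_1 exists and is selected. Suppose both the truthful profile (v_i, b_{−i}) and an overbidding profile (b_i', b_{−i}) with b_i' > v_i are generic, i.e. WTP_total ≠ P under each profile. Then member i's collective utility (valued in the extended reals, with u_i = −∞ when p_i > v_i) under truthful bidding is at least its collective utility under overbidding: u_i(v_i, b_{−i}) ≥ u_i(b_i', b_{−i}). Together with the corresponding statement for underbidding, M_1 is incentive compatible in generic games. -/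
open scoped Classical

noncomputable section

/-- A feasible price certifies that the DAO wins. -/
theorem FeasibleP1.le_wtpTotalRF {n : ℕ} {α P q : ℝ} {b : Fin n → ℝ} (hα : 0 < α) (hP : 0 < P)
    (h : FeasibleP1 n α P b q) : P ≤ wtpTotalRF n α b := by
  obtain ⟨-, hsum⟩ := h
  set S := Finset.univ.filter (fun j => q / (1 + α) ≤ b j) with hS
  have hne : S.Nonempty := by
    rw [Finset.nonempty_iff_ne_empty]
    intro h0
    rw [h0, Finset.sum_empty] at hsum
    exact hP.ne hsum
  obtain ⟨t, ht, hmin⟩ := S.exists_min_image b hne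
  have ht' : q / (1 + α) ≤ b t := by simpa [hS] using ht
  have hfilter : Finset.univ.filter (fun j => b t ≤ b j) = S := by
    ext j
    refine ⟨fun hj => ?_, fun hj => by simpa using hmin j hj⟩
    simp only [Finset.mem_filter, Finset.mem_univ, true_and, hS] at hj ⊢
    exact ht'.trans hj
  have hq : q ≤ (1 + α) * b t := by
    rwa [div_le_iff₀' (by linarith)] at ht'
  have hbdd : BddAbove {x : ℝ | ∃ t : Fin n,
      x = ∑ j ∈ Finset.univ.filter (fun j => b t ≤ b j), min (b j) ((1 + α) * b t)} := by
    refine ((Set.finite_range fun t : Fin n =>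
      ∑ j ∈ Finset.univ.filter (fun j => b t ≤ b j), min (b j) ((1 + α) * b t)).subset
      ?_).bddAbove
    rintro x ⟨t, rfl⟩
    exact ⟨t, rfl⟩
  calc P = ∑ j ∈ S, min (b j) q := hsum.symm
    _ ≤ ∑ j ∈ S, min (b j) ((1 + α) * b t) :=
        Finset.sum_le_sum fun j _ => min_le_min_left _ hq
    _ ≤ wtpTotalRF n α b := le_csSup hbdd ⟨t, by rw [hfilter]⟩

/-- A member whose bid is at least the price (before and after a change of bid) does not
affect feasibility. -/
theorem FeasibleP1.update {n : ℕ} {α P q c d : ℝ} {b : Fin n → ℝ} {i : Fin n} (hα : 0 < α)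
    (hc : q ≤ c) (hd : q ≤ d) (h : FeasibleP1 n α P (Function.update b i c) q) :
    FeasibleP1 n α P (Function.update b i d) q := by
  obtain ⟨hq, hsum⟩ := h
  have hdiv : q / (1 + α) ≤ q := div_le_self hq.le (by linarith)
  refine ⟨hq, ?_⟩
  rw [← hsum, Finset.sum_filter, Finset.sum_filter]
  refine Finset.sum_congr rfl fun j _ => ?_
  by_cases hj : j = i
  · subst hj
    simp [hc, hd, hdiv.trans hc, hdiv.trans hd]
  · simp [hj]

/-- Accesses do not depend on a bid that is at least the price. -/
theorem xRF_update {n : ℕ} {α q c d : ℝ} {b : Fin n → ℝ} {i : Fin n} (hα : 0 < α) (hq : 0 < q)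
    (hc : q ≤ c) (hd : q ≤ d) :
    xRF n α (Function.update b i c) q = xRF n α (Function.update b i d) q := by
  have hdiv : q / (1 + α) ≤ q := div_le_self hq.le (by linarith)
  funext j
  by_cases hj : j = i
  · subst hj
    simp [xRF, hdiv.trans hc, hdiv.trans hd, min_eq_left ((one_le_div hq).2 hc),
      min_eq_left ((one_le_div hq).2 hd)]
  · simp [xRF, hj]

/-- Payments do not depend on a bid that is at least the price. -/
theorem pRF_update {n : ℕ} {α q c d : ℝ} {b : Fin n → ℝ} {i : Fin n} (hα : 0 < α) (hq : 0 < q)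
    (hc : q ≤ c) (hd : q ≤ d) :
    pRF n α (Function.update b i c) q = pRF n α (Function.update b i d) q := by
  have hdiv : q / (1 + α) ≤ q := div_le_self hq.le (by linarith)
  funext j
  by_cases hj : j = i
  · subst hj
    simp [pRF, hdiv.trans hc, hdiv.trans hd, hc, hd]
  · simp [pRF, hj]

theorem utilRF_of_eq_zero {n : ℕ} {α : ℝ} {v x p : Fin n → ℝ} {i : Fin n} (hv : 0 ≤ v i)
    (hx : x i = 0) (hp : p i = 0) : utilRF n α v x p i = 0 := by
  simp [utilRF, hx, hp, hv.not_gt]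

/-- A truthful member has nonnegative collective utility when the DAO wins. -/
theorem utilRF_nonneg_of_truthful {n : ℕ} {α q : ℝ} {v b : Fin n → ℝ} {i : Fin n} (hα : 0 < α)
    (hq : 0 < q) (hv : ∀ j, 0 < v j) (hb : ∀ j, 0 < b j) (hi : b i = v i) :
    0 ≤ utilRF n α v (xRF n α b q) (pRF n α b q) i := by
  by_cases hin : q / (1 + α) ≤ b i
  · have hx : xRF n α b q i = min 1 (b i / q) := if_pos hin
    have hp : pRF n α b q i = min (b i) q := if_pos hin
    have hxpos : 0 < xRF n α b q i := by
      rw [hx]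
      exact lt_min one_pos (div_pos (hb i) hq)
    have hple : ¬ v i < pRF n α b q i := by
      rw [hp, ← hi]
      exact (min_le_left _ _).not_gt
    have hxnn : ∀ j, 0 ≤ xRF n α b q j := fun j => by
      unfold xRF
      split_ifs
      · exact le_min zero_le_one (div_pos (hb j) hq).le
      · exact le_rfl
    have hsum : v i * xRF n α b q i ≤ ∑ j, v j * xRF n α b q j :=
      Finset.single_le_sum (f := fun j => v j * xRF n α b q j)
        (fun j _ => mul_nonneg (hv j).le (hxnn j)) (Finset.mem_univ i)
    have hkey : pRF n α b q i ≤ (1 + α) * (v i * xRF n α b q i) := by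
      rw [hx, hp, hi]
      rw [hi, div_le_iff₀' (by linarith)] at hin
      rcases le_total q (v i) with h | h
      · rw [min_eq_right h, min_eq_left ((one_le_div hq).2 h), mul_one]
        exact hin
      · rw [min_eq_left h, min_eq_right ((div_le_one hq).2 h), ← mul_div_assoc,
          ← mul_div_assoc, le_div_iff₀ hq]
        nlinarith [mul_le_mul_of_nonneg_left hin (hv i).le]
    rw [utilRF, if_neg hple, if_pos hxpos]
    exact_mod_cast (by nlinarith [mul_le_mul_of_nonneg_left hsum hα.le] :
      (0 : ℝ) ≤ v i * xRF n α b q i - pRF n α b q i + α * ∑ j, v j * xRF n α b q j)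
  · exact (utilRF_of_eq_zero (hv i).le (if_neg hin) (if_neg hin)).ge

/-- no profitable overbidding in generic games: fix `α > 0`, true
values `v > 0`, a highest competing bid `P > 0` and the others' bids.  If the truthful
profile `(v_i, b_{-i})` and an overbidding profile `(b_i', b_{-i})` with `b_i' > v_i`
are both generic (`WTP_total ≠ P`), and in each winning scenario a minimal feasible
`P_1` exists and is selected, then member `i`'s collective utility (extended-real
valued, `−∞` when `p_i > v_i`) under truthful bidding is at least that under
overbidding.  Together with the corresponding statement for underbidding, `M_1` is
incentive compatible in generic games. -/
theorem stmt15 (n : ℕ) (α P : ℝ) (hα : 0 < α) (hP : 0 < P)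
    (v : Fin n → ℝ) (hv : ∀ j, 0 < v j) (i : Fin n)
    (b : Fin n → ℝ) (hb : ∀ j, 0 < b j)
    (b' : ℝ) (hb'gt : v i < b')
    (B1 B2 : Fin n → ℝ)
    (hB1 : B1 = Function.update b i (v i))
    (hB2 : B2 = Function.update b i b')
    (hgen1 : wtpTotalRF n α B1 ≠ P)
    (hgen2 : wtpTotalRF n α B2 ≠ P)
    (P1a P1b : ℝ)
    (hsel1 : P ≤ wtpTotalRF n α B1 → IsLeast {q : ℝ | FeasibleP1 n α P B1 q} P1a)
    (hsel2 : P ≤ wtpTotalRF n α B2 → IsLeast {q : ℝ | FeasibleP1 n α P B2 q} P1b) :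
    utilRF n α v (outX n α B2 P P1b) (outP n α B2 P P1b) i ≤
      utilRF n α v (outX n α B1 P P1a) (outP n α B1 P P1a) i := by
  have hB1pos : ∀ j, 0 < B1 j := fun j => by
    by_cases hj : j = i
    · subst hj; simp [hB1, hv]
    · simp [hB1, hj, hb]
  have htruth : 0 ≤ utilRF n α v (outX n α B1 P P1a) (outP n α B1 P P1a) i := by
    by_cases hw : P ≤ wtpTotalRF n α B1
    · have hX : outX n α B1 P P1a = xRF n α B1 P1a := funext fun _ => if_pos hw
      have hY : outP n α B1 P P1a = pRF n α B1 P1a := funext fun _ => if_pos hw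
      rw [hX, hY]
      exact utilRF_nonneg_of_truthful hα (hsel1 hw).1.1 hv hB1pos (by simp [hB1])
    · exact (utilRF_of_eq_zero (hv i).le (if_neg hw) (if_neg hw)).ge
  by_cases hw2 : P ≤ wtpTotalRF n α B2
  swap
  · rwa [utilRF_of_eq_zero (x := outX n α B2 P P1b) (hv i).le (if_neg hw2) (if_neg hw2)]
  have hX2 : outX n α B2 P P1b = xRF n α B2 P1b := funext fun _ => if_pos hw2
  have hY2 : outP n α B2 P P1b = pRF n α B2 P1b := funext fun _ => if_pos hw2
  rw [hX2, hY2]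
  by_cases hin : P1b / (1 + α) ≤ B2 i
  swap
  · rwa [utilRF_of_eq_zero (x := xRF n α B2 P1b) (hv i).le (if_neg hin) (if_neg hin)]
  by_cases hpay : v i < pRF n α B2 P1b i
  · rw [utilRF, if_pos hpay]
    exact bot_le
  have hle : P1b ≤ v i := by
    have hp : pRF n α B2 P1b i = min b' P1b := by
      rw [pRF, if_pos hin, hB2, Function.update_self]
    rw [hp, not_lt, min_le_iff] at hpay
    exact hpay.resolve_left hb'gt.not_ge
  have hle' : P1b ≤ b' := hle.trans hb'gt.le
  have hf2 : FeasibleP1 n α P B2 P1b := (hsel2 hw2).1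
  have hf1 : FeasibleP1 n α P B1 P1b := by
    rw [hB2] at hf2
    rw [hB1]
    exact hf2.update hα hle' hle
  have hw1 : P ≤ wtpTotalRF n α B1 := hf1.le_wtpTotalRF hα hP
  have hab : P1a ≤ P1b := (hsel1 hw1).2 hf1
  have hba : P1b ≤ P1a := by
    have hfa : FeasibleP1 n α P B1 P1a := (hsel1 hw1).1
    refine (hsel2 hw2).2 (?_ : FeasibleP1 n α P B2 P1a)
    rw [hB1] at hfa
    rw [hB2]
    exact hfa.update hα (hab.trans hle) (hab.trans hle')
  obtain rfl : P1a = P1b := le_antisymm hab hba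
  have hX1 : outX n α B1 P P1a = xRF n α B1 P1a := funext fun _ => if_pos hw1
  have hY1 : outP n α B1 P P1a = pRF n α B1 P1a := funext fun _ => if_pos hw1
  rw [hX1, hY1, hB1, hB2, xRF_update hα hf2.1 hle' hle, pRF_update hα hf2.1 hle' hle]

end
end
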